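/- arXiv:1701.01584 — 8 statements merged into one kernel-verified Lean document; each statement's English description precedes it below -/
import Mathlib

section
/- Let n ≥ 3 be an integer. In the rational function field ℚ(C, A₂, A₃, …, Aₙ, D, B₂, B₃, …, Bₙ) in 2n independent indeterminates over ℚ, define the 2n elements: Ŵ_{n−1} = 1/A₂ − 1; Ŵ₀ = (1 − (2A₂ + A₃ + A₄ + ⋯ + Aₙ)) / (A₂ + B₂ + ⋯ + B_{n−1}); Ŵ_{n−k} = (1 − (2A₂ + A₃ + ⋯ + A_{k+1}) + B_k) / (A₂ + B₂ + ⋯ + B_k) for 2 ≤ k ≤ n−1; W_{n−k} = C·(1 − (2A₂ + A₃ + ⋯ + A_k)) / (A₂ + B₂ + ⋯ + B_k) for 2 ≤ k ≤ n; and W_{n−1} = (D + C·(1 − 2A₂)) / A₂. Then the 2n elements W₀, …, W_{n−1}, Ŵ₀, …, Ŵ_{n−1} are algebraically independent over ℚ. -/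
/-!
The field `K` has transcendence degree `2n` over `ℚ`, so the `2n` given elements are algebraically
independent as soon as `K` is algebraic over the field `E` they generate.

Put `S_k = 1 - (2A₂ + A₃ + ⋯ + A_k)` and `T_k = A₂ + B₂ + ⋯ + B_k`, so `T₁ = A₂`. Then
`A₂ ∈ E` because of `Ŵ_{n-1}`, and the other elements say
`T_k = C S_k / W_{n-k}` and `S_{k+1} = (Ŵ_{n-k} - 1) T_k + T_{k-1}`. Hence
`T_{k+1} = C (p T_k + q T_{k-1})` with `p, q ∈ E` and `p ≠ 0`, so that for `k ≤ n - 1` the element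
`T_k` is the value at `C` of a polynomial over `E` of degree exactly `k - 1`.
Finally `Ŵ₀ = S_n / T_{n-1}` together with the formula for `S_n` gives a linear relation
over `E` between `T_{n-1}` and `T_{n-2}`; the degrees of the two
polynomials differ, so this is a nontrivial equation for `C` (`isAlgebraic_of_recurrence`).
Once `C` is algebraic over `E`, the relations above successively give all `T_k` and `S_k`, hence
all the indeterminates.
-/

/- STATEMENT 0: In ℚ(C, A₂, …, Aₙ, D, B₂, …, Bₙ) (rational function field in 2n
indeterminates over ℚ, n ≥ 3), the 2n elements W₀, …, W_{n−1}, Ŵ₀, …, Ŵ_{n−1}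
defined by the formulas of the paper are algebraically independent over ℚ. -/

noncomputable section
open MvPolynomial Finset

/-- Index type for the 2n indeterminates `C`, `D`, `A₂, …, Aₙ`, `B₂, …, Bₙ`. -/
abbrev Stmt0.σ (n : ℕ) := (Unit ⊕ Unit) ⊕ (Fin (n - 1) ⊕ Fin (n - 1))

/-- The rational function field ℚ(C, A₂, …, Aₙ, D, B₂, …, Bₙ). -/
abbrev Stmt0.K (n : ℕ) := FractionRing (MvPolynomial (Stmt0.σ n) ℚ)

namespace Stmt0

variable (n : ℕ)

/-- The indeterminate `C`. -/
def Cv : K n := algebraMap (MvPolynomial (σ n) ℚ) (K n) (X (Sum.inl (Sum.inl ())))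

/-- The indeterminate `D`. -/
def Dv : K n := algebraMap (MvPolynomial (σ n) ℚ) (K n) (X (Sum.inl (Sum.inr ())))

/-- The indeterminate `A_k`, for `2 ≤ k ≤ n` (junk value `0` outside this range). -/
def Av (k : ℕ) : K n :=
  if h : k - 2 < n - 1 then
    algebraMap (MvPolynomial (σ n) ℚ) (K n) (X (Sum.inr (Sum.inl ⟨k - 2, h⟩))) else 0

/-- The indeterminate `B_k`, for `2 ≤ k ≤ n` (junk value `0` outside this range). -/
def Bv (k : ℕ) : K n :=
  if h : k - 2 < n - 1 then
    algebraMap (MvPolynomial (σ n) ℚ) (K n) (X (Sum.inr (Sum.inr ⟨k - 2, h⟩))) else 0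

/-- `W_j` for `0 ≤ j ≤ n-1` :  `W_{n-k} = C(1-(2A₂+A₃+⋯+A_k))/(A₂+B₂+⋯+B_k)` for
`2 ≤ k ≤ n`, and `W_{n-1} = (D + C(1-2A₂))/A₂`. -/
def W (j : ℕ) : K n :=
  if j = n - 1 then (Dv n + Cv n * (1 - 2 * Av n 2)) / Av n 2
  else Cv n * (1 - (Av n 2 + ∑ i ∈ Icc 2 (n - j), Av n i)) /
      (Av n 2 + ∑ i ∈ Icc 2 (n - j), Bv n i)

/-- `Ŵ_j` for `0 ≤ j ≤ n-1` : `Ŵ_{n-1} = 1/A₂ - 1`,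
`Ŵ₀ = (1-(2A₂+A₃+⋯+Aₙ))/(A₂+B₂+⋯+B_{n-1})`, and
`Ŵ_{n-k} = (1-(2A₂+A₃+⋯+A_{k+1})+B_k)/(A₂+B₂+⋯+B_k)` for `2 ≤ k ≤ n-1`. -/
def Wh (j : ℕ) : K n :=
  if j = n - 1 then 1 / Av n 2 - 1
  else if j = 0 then
    (1 - (Av n 2 + ∑ i ∈ Icc 2 n, Av n i)) / (Av n 2 + ∑ i ∈ Icc 2 (n - 1), Bv n i)
  else
    (1 - (Av n 2 + ∑ i ∈ Icc 2 (n - j + 1), Av n i) + Bv n (n - j)) /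
      (Av n 2 + ∑ i ∈ Icc 2 (n - j), Bv n i)

end Stmt0

/-- A sequence `t` in a field extension `K / E` which satisfies a recurrence raising the degree in
`c` by one at each step is given by polynomials in `c` of exact degree `i`. A linear relation over
`E` between two consecutive terms therefore makes `c` algebraic. -/
theorem Stmt0.isAlgebraic_of_recurrence {E K : Type*} [Field E] [Field K] [Algebra E K]
    (c : K) (t : ℕ → K) (p q : ℕ → E) (a s d : E) (m : ℕ)
    (ha : a ≠ 0) (hs : s ≠ 0) (h0 : t 0 = algebraMap E K a) (h1 : t 1 = c * algebraMap E K s)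
    (hp : ∀ i < m, p i ≠ 0)
    (hrec : ∀ i < m, t (i + 2) =
      c * (algebraMap E K (p i) * t (i + 1) + algebraMap E K (q i) * t i))
    (hd : algebraMap E K d * t (m + 1) = t m) : IsAlgebraic E c := by
  have key : ∀ i ≤ m, (∃ P : Polynomial E, P.degree = i ∧ Polynomial.aeval c P = t i) ∧
      ∃ P : Polynomial E, P.degree = (i + 1 : ℕ) ∧ Polynomial.aeval c P = t (i + 1) := by
    intro i
    induction i with
    | zero =>
      intro _
      refine ⟨⟨.C a, by simp [Polynomial.degree_C ha], by simp [h0]⟩,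
        ⟨.X * .C s, by simp [Polynomial.degree_C hs], by rw [h1]; simp [mul_comm c]⟩⟩
    | succ i ih =>
      intro hi
      obtain ⟨⟨P, hPd, hP⟩, Q, hQd, hQ⟩ := ih (by omega)
      refine ⟨⟨Q, hQd, hQ⟩, .X * (.C (p i) * Q + .C (q i) * P), ?_, ?_⟩
      · have hdQ : (Polynomial.C (p i) * Q).degree = (i + 1 : ℕ) := by
          rw [Polynomial.degree_mul, Polynomial.degree_C (hp i (by omega)), hQd, zero_add]
        have hdP : (Polynomial.C (q i) * P).degree < (Polynomial.C (p i) * Q).degree := by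
          rw [hdQ]
          refine lt_of_le_of_lt (b := (i : WithBot ℕ)) ?_ ?_
          · rw [← hPd, ← Polynomial.smul_eq_C_mul]
            exact Polynomial.degree_smul_le _ _
          · exact_mod_cast Nat.lt_succ_self i
        rw [Polynomial.degree_mul, Polynomial.degree_X,
          Polynomial.degree_add_eq_left_of_degree_lt hdP, hdQ]
        norm_cast
        omega
      · simp [hP, hQ, hrec i (by omega)]
  obtain ⟨⟨P, hPd, hP⟩, Q, hQd, hQ⟩ := key m le_rfl
  refine ⟨.C d * Q - P, ?_, by simp [hP, hQ, hd]⟩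
  intro h
  have hdeg := congrArg Polynomial.degree (sub_eq_zero.mp h)
  rw [hPd] at hdeg
  by_cases hd0 : d = 0
  · simp [hd0] at hdeg
  · rw [Polynomial.degree_mul, Polynomial.degree_C hd0, hQd, zero_add] at hdeg
    norm_cast at hdeg
    omega

namespace Stmt0

variable (n : ℕ)

/-- `S k = 1 - (2A₂ + A₃ + ⋯ + A_k)` for `2 ≤ k ≤ n`. -/
def S (k : ℕ) : K n := 1 - (Av n 2 + ∑ i ∈ Icc 2 k, Av n i)

/-- `T k = A₂ + B₂ + ⋯ + B_k` for `1 ≤ k ≤ n`, with `T 1 = A₂`. -/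
def T (k : ℕ) : K n := Av n 2 + ∑ i ∈ Icc 2 k, Bv n i

/-- The rational point `C = D = 0`, `Aᵢ = a`, `Bᵢ = b`. -/
def point (a b : ℚ) : σ n → ℚ :=
  Sum.elim (fun _ => 0) (Sum.elim (fun _ => a) (fun _ => b))

variable {n}

/-- A polynomial with a nonzero value at some rational point is nonzero in `K n`. -/
theorem ne_zero_of_eval {x : K n} (f : σ n → ℚ) (P : MvPolynomial (σ n) ℚ)
    (hx : x = algebraMap _ (K n) P) (h : MvPolynomial.eval f P ≠ 0) : x ≠ 0 := by
  rintro rfl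
  have : P = 0 := by
    apply IsFractionRing.injective (MvPolynomial (σ n) ℚ) (K n)
    rw [← hx, map_zero]
  exact h (by rw [this, map_zero])

/-- `A_k` comes from a polynomial whose value at `point n a b` is `a`, or `0` for `k` out of range. -/
theorem exists_Av (k : ℕ) : ∃ P : MvPolynomial (σ n) ℚ, Av n k = algebraMap _ (K n) P ∧
    ∀ a b : ℚ, MvPolynomial.eval (point n a b) P = if k - 2 < n - 1 then a else 0 := by
  unfold Av
  split_ifs with h
  · exact ⟨_, rfl, by simp [point]⟩
  · exact ⟨0, by simp, by simp⟩

/-- `B_k` comes from a polynomial whose value at `point n a b` is `b`, or `0` for `k` out of range. -/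
theorem exists_Bv (k : ℕ) : ∃ P : MvPolynomial (σ n) ℚ, Bv n k = algebraMap _ (K n) P ∧
    ∀ a b : ℚ, MvPolynomial.eval (point n a b) P = if k - 2 < n - 1 then b else 0 := by
  unfold Bv
  split_ifs with h
  · exact ⟨_, rfl, by simp [point]⟩
  · exact ⟨0, by simp, by simp⟩

theorem Cv_ne_zero : Cv n ≠ 0 :=
  ne_zero_of_eval (fun _ => 1) _ rfl (by simp)

theorem T_ne_zero (hn : 3 ≤ n) (k : ℕ) : T n k ≠ 0 := by
  choose P hP hPe using exists_Av (n := n)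
  choose Q hQ hQe using exists_Bv (n := n)
  -- At `C = D = Bᵢ = 0`, `Aᵢ = 1` the value of `T k` is `1`.
  refine ne_zero_of_eval (point n 1 0) (P 2 + ∑ i ∈ Icc 2 k, Q i) ?_ ?_
  · simp [T, hP, hQ]
  · have : 0 < n - 1 := by omega
    simp [hPe, hQe, this]

theorem S_ne_zero (k : ℕ) : S n k ≠ 0 := by
  choose P hP hPe using exists_Av (n := n)
  -- The constant term of `S k` is `1`.
  refine ne_zero_of_eval (point n 0 0) (1 - (P 2 + ∑ i ∈ Icc 2 k, P i)) ?_ ?_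
  · simp [S, hP]
  · simp [hPe]

theorem S_sub_T_ne_zero (k l : ℕ) : S n k - T n l ≠ 0 := by
  choose P hP hPe using exists_Av (n := n)
  choose Q hQ hQe using exists_Bv (n := n)
  -- The constant term of `S k - T l` is `1`.
  refine ne_zero_of_eval (point n 0 0)
      (1 - (P 2 + ∑ i ∈ Icc 2 k, P i) - (P 2 + ∑ i ∈ Icc 2 l, Q i)) ?_ ?_
  · simp [S, T, hP, hQ]
  · simp [hPe, hQe]

theorem T_one : T n 1 = Av n 2 := by simp [T]

theorem S_two : S n 2 = 1 - 2 * Av n 2 := by simp [S]; ring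

theorem S_succ (k : ℕ) (hk : 1 ≤ k) : S n (k + 1) = S n k - Av n (k + 1) := by
  unfold S
  rw [Finset.sum_Icc_succ_top (by omega)]
  ring

theorem T_succ (k : ℕ) (hk : 1 ≤ k) : T n (k + 1) = T n k + Bv n (k + 1) := by
  unfold T
  rw [Finset.sum_Icc_succ_top (by omega)]
  ring

theorem W_eq (k : ℕ) (hk : 2 ≤ k) (hkn : k ≤ n) : W n (n - k) = Cv n * S n k / T n k := by
  have h1 : n - k ≠ n - 1 := by omega
  have h2 : n - (n - k) = k := by omega
  simp [W, h1, h2, S, T]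

theorem Wh_eq (k : ℕ) (hk : 2 ≤ k) (hkn : k + 1 ≤ n) :
    Wh n (n - k) = (S n (k + 1) + Bv n k) / T n k := by
  have h1 : n - k ≠ n - 1 := by omega
  have h2 : n - (n - k) = k := by omega
  have h3 : n - k ≠ 0 := by omega
  simp only [Wh, h1, h2, h3, S, T, if_false]

theorem Wh_zero (hn : 3 ≤ n) : Wh n 0 = S n n / T n (n - 1) := by
  have h1 : 0 ≠ n - 1 := by omega
  simp [Wh, h1, S, T]

/-- The recurrence `S_{k+1} = (Ŵ_{n-k} - 1) T_k + T_{k-1}`, with `k = i + 2`. -/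
theorem S_rec (hn : 3 ≤ n) (i : ℕ) (hi : i + 3 ≤ n) :
    S n (i + 3) = (Wh n (n - (i + 2)) - 1) * T n (i + 2) + T n (i + 1) := by
  rw [Wh_eq (i + 2) (by omega) (by omega)]
  have := T_ne_zero hn (i + 2)
  have hB := T_succ (n := n) (i + 1) (by omega)
  field_simp
  rw [hB]
  ring

theorem W_ne_zero (hn : 3 ≤ n) (k : ℕ) (hk : 2 ≤ k) (hkn : k ≤ n) : W n (n - k) ≠ 0 := by
  rw [W_eq k hk hkn]
  exact div_ne_zero (mul_ne_zero Cv_ne_zero (S_ne_zero k)) (T_ne_zero hn k)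

theorem Wh_sub_one_ne_zero (hn : 3 ≤ n) (i : ℕ) (hi : i + 3 ≤ n) :
    Wh n (n - (i + 2)) - 1 ≠ 0 := by
  intro h
  have := S_rec hn i hi
  rw [h, zero_mul, zero_add] at this
  exact S_sub_T_ne_zero (n := n) (i + 3) (i + 1) (sub_eq_zero.mpr this)

theorem T_eq (hn : 3 ≤ n) (k : ℕ) (hk : 2 ≤ k) (hkn : k ≤ n) :
    T n k = Cv n * (S n k / W n (n - k)) := by
  have h1 := W_eq k hk hkn
  have h2 := W_ne_zero hn k hk hkn
  have h3 := T_ne_zero hn k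
  rw [eq_div_iff h3] at h1
  rw [← mul_div_assoc, eq_div_iff h2, ← h1, mul_comm]

theorem A_two_eq : Av n 2 = (Wh n (n - 1) + 1)⁻¹ := by
  simp [Wh]

/-- `C` is algebraic over any subfield containing all `W_j` and `Ŵ_j`. -/
theorem isAlgebraic_Cv (hn : 3 ≤ n) (E : IntermediateField ℚ (K n))
    (hW : ∀ j < n, W n j ∈ E) (hWh : ∀ j < n, Wh n j ∈ E) : IsAlgebraic E (Cv n) := by
  have hA : Av n 2 ∈ E := by
    rw [A_two_eq]
    exact inv_mem (add_mem (hWh _ (by omega)) (one_mem _))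
  have hA0 : Av n 2 ≠ 0 := T_one (n := n) ▸ T_ne_zero hn 1
  have hS2 : S n 2 ∈ E := by
    rw [S_two, two_mul]
    exact sub_mem (one_mem _) (add_mem hA hA)
  let w : ℕ → E := fun i => ⟨W n (n - (i + 2)), hW _ (by omega)⟩
  let v : ℕ → E := fun i => ⟨Wh n (n - (i + 2)), hWh _ (by omega)⟩
  have hw : ∀ i, i + 2 ≤ n → w i ≠ 0 := fun i hi h =>
    W_ne_zero hn (i + 2) (by omega) hi (congrArg Subtype.val h)
  refine isAlgebraic_of_recurrence (Cv n) (fun i => T n (i + 1))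
    (fun i => (v i - 1) / w (i + 1)) (fun i => 1 / w (i + 1)) ⟨Av n 2, hA⟩ (⟨S n 2, hS2⟩ / w 0)
    (⟨Wh n 0, hWh 0 (by omega)⟩ - (v (n - 3) - 1)) (n - 3) ?_ ?_ ?_ ?_ ?_ ?_ ?_
  · exact fun h => hA0 (congrArg Subtype.val h)
  · exact div_ne_zero (fun h => S_ne_zero 2 (congrArg Subtype.val h)) (hw 0 (by omega))
  · exact T_one
  · exact T_eq hn 2 le_rfl (by omega)
  · intro i hi
    refine div_ne_zero (fun h => ?_) (hw _ (by omega))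
    exact Wh_sub_one_ne_zero hn i (by omega) (congrArg Subtype.val h)
  · intro i hi
    have h1 := T_eq hn (i + 3) (by omega) (by omega)
    rw [S_rec hn i (by omega)] at h1
    change T n (i + 3) = Cv n * ((Wh n (n - (i + 2)) - 1) / W n (n - (i + 3)) * T n (i + 2) +
      1 / W n (n - (i + 3)) * T n (i + 1))
    rw [h1]
    ring
  · obtain ⟨m, rfl⟩ : ∃ m, n = m + 3 := ⟨n - 3, by omega⟩
    change (Wh (m + 3) 0 - (Wh (m + 3) (m + 3 - (m + 2)) - 1)) * T (m + 3) (m + 2)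
      = T (m + 3) (m + 1)
    have h1 := S_rec hn m le_rfl
    have h2 := Wh_zero hn
    rw [eq_div_iff (T_ne_zero hn _)] at h2
    change Wh (m + 3) 0 * T (m + 3) (m + 2) = _ at h2
    rw [sub_mul, h2, h1]
    ring

/-- A subfield containing `C`, all `W_j` and all `Ŵ_j` contains `S_k` for `2 ≤ k ≤ n`
and `T_k` for `1 ≤ k ≤ n - 1`. -/
theorem S_T_mem (hn : 3 ≤ n) (L : IntermediateField ℚ (K n))
    (hW : ∀ j < n, W n j ∈ L) (hWh : ∀ j < n, Wh n j ∈ L) (hC : Cv n ∈ L) (k : ℕ)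
    (hk : k + 2 ≤ n) : S n (k + 2) ∈ L ∧ T n (k + 1) ∈ L := by
  induction k with
  | zero =>
    have hA : Av n 2 ∈ L := by
      rw [A_two_eq]
      exact inv_mem (add_mem (hWh _ (by omega)) (one_mem _))
    rw [S_two, zero_add, T_one, two_mul]
    exact ⟨sub_mem (one_mem _) (add_mem hA hA), hA⟩
  | succ k ih =>
    obtain ⟨hS, hT⟩ := ih (by omega)
    have hT' : T n (k + 2) ∈ L := by
      rw [T_eq hn (k + 2) (by omega) (by omega)]
      exact mul_mem hC (div_mem hS (hW _ (by omega)))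
    refine ⟨?_, hT'⟩
    change S n (k + 3) ∈ L
    rw [S_rec hn k (by omega)]
    exact add_mem (mul_mem (sub_mem (hWh _ (by omega)) (one_mem _)) hT') hT

theorem eq_top_of_mem (hn : 3 ≤ n) (L : IntermediateField ℚ (K n))
    (hW : ∀ j < n, W n j ∈ L) (hWh : ∀ j < n, Wh n j ∈ L) (hC : Cv n ∈ L) : L = ⊤ := by
  have hST := S_T_mem hn L hW hWh hC
  have hS : ∀ k, k + 2 ≤ n → S n (k + 2) ∈ L := fun k hk => (hST k hk).1
  have hT : ∀ k, k + 1 ≤ n → T n (k + 1) ∈ L := by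
    intro k hk
    rcases Nat.lt_or_ge (k + 1) n with h | h
    · exact (hST k (by omega)).2
    · obtain ⟨j, rfl⟩ : ∃ j, k = j + 1 := ⟨k - 1, by omega⟩
      rw [T_eq hn (j + 1 + 1) (by omega) (by omega)]
      exact mul_mem hC (div_mem (hS j (by omega)) (hW _ (by omega)))
  have hA2 : Av n 2 ∈ L := T_one (n := n) ▸ hT 0 (by omega)
  have hA : ∀ k, k + 2 ≤ n → Av n (k + 2) ∈ L := by
    rintro (_ | k) hk
    · exact hA2
    · have := S_succ (n := n) (k + 2) (by omega)
      rw [show Av n (k + 1 + 2) = S n (k + 2) - S n (k + 1 + 2) by rw [this]; ring]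
      exact sub_mem (hS _ (by omega)) (hS _ (by omega))
  have hB : ∀ k, k + 2 ≤ n → Bv n (k + 2) ∈ L := by
    intro k hk
    have := T_succ (n := n) (k + 1) (by omega)
    rw [show Bv n (k + 2) = T n (k + 1 + 1) - T n (k + 1) by rw [this]; ring]
    exact sub_mem (hT _ (by omega)) (hT _ (by omega))
  have hD : Dv n ∈ L := by
    have hA0 : Av n 2 ≠ 0 := T_one (n := n) ▸ T_ne_zero hn 1
    have h1 : Dv n = W n (n - 1) * Av n 2 - Cv n * S n 2 := by
      simp only [W, if_true, S_two]
      field_simp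
      ring
    rw [h1]
    exact sub_mem (mul_mem (hW _ (by omega)) hA2) (mul_mem hC (hS 0 (by omega)))
  have hpoly : ∀ P : MvPolynomial (σ n) ℚ, algebraMap _ (K n) P ∈ L := by
    intro P
    induction P using MvPolynomial.induction_on with
    | C a =>
      rw [← MvPolynomial.algebraMap_eq, ← IsScalarTower.algebraMap_apply]
      exact L.algebraMap_mem a
    | add p q hp hq => rw [map_add]; exact add_mem hp hq
    | mul_X p i hp =>
      rw [map_mul]
      refine mul_mem hp ?_
      rcases i with (⟨⟩ | ⟨⟩) | (i | i)
      · exact hC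
      · exact hD
      · have := hA i (by omega)
        simpa [Av] using this
      · have := hB i (by omega)
        simpa [Bv] using this
  rw [eq_top_iff]
  intro x _
  obtain ⟨p, q, -, rfl⟩ := IsFractionRing.div_surjective (A := MvPolynomial (σ n) ℚ) x
  exact div_mem (hpoly p) (hpoly q)

end Stmt0

/-- The 2n exponents `W₀, …, W_{n-1}, Ŵ₀, …, Ŵ_{n-1}` are algebraically
independent over ℚ. -/
theorem stmt0 (n : ℕ) (hn : 3 ≤ n) :
    AlgebraicIndependent ℚ
      (Sum.elim (fun j : Fin n => Stmt0.W n j) (fun j : Fin n => Stmt0.Wh n j)) := by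
  set x := Sum.elim (fun j : Fin n => Stmt0.W n j) (fun j : Fin n => Stmt0.Wh n j) with hx
  let E := IntermediateField.adjoin ℚ (Set.range x)
  have hW : ∀ j < n, Stmt0.W n j ∈ E := fun j hj =>
    IntermediateField.subset_adjoin _ _ ⟨Sum.inl ⟨j, hj⟩, rfl⟩
  have hWh : ∀ j < n, Stmt0.Wh n j ∈ E := fun j hj =>
    IntermediateField.subset_adjoin _ _ ⟨Sum.inr ⟨j, hj⟩, rfl⟩
  let L : IntermediateField ℚ (Stmt0.K n) := (algebraicClosure E (Stmt0.K n)).restrictScalars ℚ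
  have hEL : ∀ y ∈ E, y ∈ L := fun y hy => (algebraicClosure E (Stmt0.K n)).algebraMap_mem ⟨y, hy⟩
  have hL : L = ⊤ := Stmt0.eq_top_of_mem hn L (fun j hj => hEL _ (hW j hj))
    (fun j hj => hEL _ (hWh j hj)) (mem_algebraicClosure_iff.mpr (Stmt0.isAlgebraic_Cv hn E hW hWh))
  have halg : Algebra.IsAlgebraic (Algebra.adjoin ℚ (Set.range x)) (Stmt0.K n) := by
    refine ⟨fun y => ?_⟩
    have hy : y ∈ L := hL ▸ IntermediateField.mem_top
    exact IntermediateField.isAlgebraic_adjoin_iff.mp (mem_algebraicClosure_iff.mp hy)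
  refine (Algebra.IsAlgebraic.isTranscendenceBasis_of_le_trdeg_of_finite ℚ x ?_).1
  refine le_trans (le_of_eq ?_) (trdeg_le_of_injective
    (IsScalarTower.toAlgHom ℚ (MvPolynomial (Stmt0.σ n) ℚ) (Stmt0.K n))
    (IsFractionRing.injective _ _))
  rw [MvPolynomial.trdeg_of_isDomain, Cardinal.lift_id, Cardinal.mk_fintype, Cardinal.mk_fintype]
  congr 1
  simp
  omega
end
end

section
/- Let n ≥ 3 be an integer. Let K = ℚ(A₂)(C, U₂, …, Uₙ, V₂, …, V_{n−1}) be the rational function field in the 2n−2 indeterminates C, U₂, …, Uₙ, V₂, …, V_{n−1} over the base field ℚ(A₂) (itself a rational function field in one indeterminate A₂ over ℚ). Set V₁ = (1 − 2A₂)/A₂ ∈ ℚ(A₂), and define Ŵ₀ = V_{n−1}; W_{n−k} = C·U_k for 2 ≤ k ≤ n; Ŵ_{n−k} = 1 + V_k − U_k/V_{k−1} for 2 ≤ k ≤ n−1. Then the 2n−2 elements Ŵ₀, …, Ŵ_{n−2}, W₀, …, W_{n−2} of K are algebraically independent over ℚ(A₂). -/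
/-!
The field `K` has transcendence degree `2n - 2` over `ℚ(A₂)`, which is also the number of elements
considered, so it suffices that `K` is algebraic over the field `E` they generate.

Let `B` be the algebraic closure of `E` in `K`.  It contains `V_{n-1}`, every `C U_k`, every
`Ŵ_{n-k}` and the constant `V₁`.  The defining relation reads
`C V_{k-1} (1 + V_k - Ŵ_{n-k}) = W_{n-k}`, so going down from `V_{n-1} ∈ B` it expresses each `V_k`
as a rational function of `C` over `B`.  For `k ≤ n - 2` its denominator has larger degree than its
numerator, because `Ŵ_{n-k} ≠ 1`; intuitively `V_k → 0` as `C → ∞`.  Since `V₁` is a nonzero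
constant, the expression for `V₁` is a nontrivial polynomial equation for `C` over `B`, and so
`C ∈ B`.  Then `U_k = W_{n-k} / C ∈ B`, and the relation gives all `V_k ∈ B` (`Stmt1.core`).
-/

/- STATEMENT 1: Let K = ℚ(A₂)(C, U₂, …, Uₙ, V₂, …, V_{n−1}) with n ≥ 3,
V₁ = (1−2A₂)/A₂ ∈ ℚ(A₂), Ŵ₀ = V_{n−1}, W_{n−k} = C·U_k (2 ≤ k ≤ n),
Ŵ_{n−k} = 1 + V_k − U_k/V_{k−1} (2 ≤ k ≤ n−1).  Then
Ŵ₀, …, Ŵ_{n−2}, W₀, …, W_{n−2} are algebraically independent over ℚ(A₂). -/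

noncomputable section
open MvPolynomial Finset

namespace Stmt1

/-- The base field `ℚ(A₂)`: rational functions in one variable over ℚ. -/
abbrev F := RatFunc ℚ

/-- Index type for the 2n−2 indeterminates `C`, `U₂, …, Uₙ`, `V₂, …, V_{n-1}`. -/
abbrev σ (n : ℕ) := Unit ⊕ (Fin (n - 1) ⊕ Fin (n - 2))

/-- The rational function field `ℚ(A₂)(C, U₂, …, Uₙ, V₂, …, V_{n-1})`. -/
abbrev K (n : ℕ) := FractionRing (MvPolynomial (σ n) F)

variable (n : ℕ)

/-- The indeterminate `C`. -/
def Cv : K n := algebraMap (MvPolynomial (σ n) F) (K n) (X (Sum.inl ()))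

/-- The indeterminate `U_k` for `2 ≤ k ≤ n` (junk value 0 outside this range). -/
def U (k : ℕ) : K n :=
  if h : k - 2 < n - 1 then
    algebraMap (MvPolynomial (σ n) F) (K n) (X (Sum.inr (Sum.inl ⟨k - 2, h⟩))) else 0

/-- `V₁ = (1 − 2A₂)/A₂ ∈ ℚ(A₂)`, and the indeterminate `V_k` for `2 ≤ k ≤ n-1`
(junk value 0 outside this range). -/
def V (k : ℕ) : K n :=
  if k = 1 then algebraMap F (K n) ((1 - 2 * RatFunc.X) / RatFunc.X)
  else if h : k - 2 < n - 2 then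
    algebraMap (MvPolynomial (σ n) F) (K n) (X (Sum.inr (Sum.inr ⟨k - 2, h⟩))) else 0

/-- `Ŵ₀ = V_{n-1}` and `Ŵ_{n-k} = 1 + V_k − U_k/V_{k-1}` for `2 ≤ k ≤ n-1`. -/
def Wh (j : ℕ) : K n :=
  if j = 0 then V n (n - 1)
  else 1 + V n (n - j) - U n (n - j) / V n (n - j - 1)

/-- `W_{n-k} = C·U_k` for `2 ≤ k ≤ n`. -/
def W (j : ℕ) : K n := Cv n * U n (n - j)

end Stmt1

namespace Stmt1

/-- If the elements `Ŵ`, `W` formed from `c`, `u`, `v` (and `v₁`) are algebraic over `E`, then so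
are `c` and all the `u_k`, `v_k`.  The elements need not be indeterminates: a few non-vanishing
conditions suffice. -/
theorem core {E A : Type*} [Field E] [Field A] [Algebra E A] (n : ℕ) (hn : 3 ≤ n)
    (c : A) (u v : ℕ → A)
    (hv1 : IsAlgebraic E (v 1)) (hvn : IsAlgebraic E (v (n - 1)))
    (hw : ∀ k, 2 ≤ k → k ≤ n → IsAlgebraic E (c * u k))
    (hwh : ∀ k, 2 ≤ k → k < n → IsAlgebraic E (1 + v k - u k / v (k - 1)))
    (hc0 : c ≠ 0) (hv0 : ∀ k, 1 ≤ k → k < n → v k ≠ 0)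
    (hu0 : ∀ k, 2 ≤ k → k < n → u k ≠ 0)
    (hne : ∀ k, 2 ≤ k → k < n → v k * v (k - 1) ≠ u k) :
    IsAlgebraic E c ∧ (∀ k, 2 ≤ k → k ≤ n → IsAlgebraic E (u k)) ∧
      ∀ k, 1 ≤ k → k < n → IsAlgebraic E (v k) := by
  let B := algebraicClosure E A
  have mem : ∀ {a : A}, IsAlgebraic E a → a ∈ B := mem_algebraicClosure_iff.2
  -- For `k ≤ n - 2`, `v_k` is a rational function of `c` over `B` with denominator of larger degree
  -- than the numerator: this propagates along `c v_{k-1} (1 + v_k - Ŵ_{n-k}) = W_{n-k}`.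
  -- The equation is kept in cleared form so that `q(c) ≠ 0` is never needed.
  have key : ∀ j k, k + j + 2 = n → 1 ≤ k → ∃ p q : Polynomial B, p.degree < q.degree ∧
      v k * q.aeval c = p.aeval c := by
    intro j
    induction j with
    | zero =>
      intro k hk hk1
      obtain rfl : n = k + 2 := by omega
      have hW := mem (hw (k + 1) (by omega) (by omega))
      have hWh := mem (hwh (k + 1) (by omega) (by omega))
      have hV := mem hvn
      have hvk := hv0 k hk1 (by omega)
      simp only [Nat.add_sub_cancel, show k + 2 - 1 = k + 1 by omega] at hWh hV
      -- `c v_k d = c u_{k+1}` with `d` a nonzero constant.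
      let d : B := 1 + ⟨_, hV⟩ - ⟨_, hWh⟩
      have hd : (d : A) = u (k + 1) / v k := by
        simp [d]
      have hd0 : d ≠ 0 := by
        intro h
        rw [h] at hd
        exact div_ne_zero (hu0 (k + 1) (by omega) (by omega)) hvk (by simpa using hd.symm)
      refine ⟨Polynomial.C ⟨_, hW⟩, Polynomial.C d * Polynomial.X, ?_, ?_⟩
      · rw [Polynomial.degree_C_mul_X hd0]
        exact Polynomial.degree_C_le.trans_lt (by norm_num)
      · simp only [map_mul, Polynomial.aeval_C, Polynomial.aeval_X,
          IntermediateField.algebraMap_apply, hd]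
        field_simp
    | succ j ih =>
      intro k hk hk1
      obtain ⟨p, q, hpq, h⟩ := ih (k + 1) (by omega) (by omega)
      have hW := mem (hw (k + 1) (by omega) (by omega))
      have hWh := mem (hwh (k + 1) (by omega) (by omega))
      have hne := hne (k + 1) (by omega) (by omega)
      have hvk := hv0 k hk1 (by omega)
      simp only [Nat.add_sub_cancel] at hWh hne
      -- `e = 1 - Ŵ_{n-k-1}` is nonzero, so `e q + p` has the same degree as `q`.
      let e : B := 1 - ⟨_, hWh⟩
      have he : (e : A) = u (k + 1) / v k - v (k + 1) := by
        simp [e]; ring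
      have he0 : e ≠ 0 := by
        intro h
        rw [h] at he
        apply hne
        have : u (k + 1) / v k = v (k + 1) := (sub_eq_zero.1 (by simpa using he.symm))
        rw [← this]; field_simp
      have hq0 : q ≠ 0 := by rintro rfl; simp at hpq
      have hdeg : (Polynomial.C e * q + p).degree = q.degree := by
        rw [Polynomial.degree_add_eq_left_of_degree_lt, Polynomial.degree_C_mul he0]
        rwa [Polynomial.degree_C_mul he0]
      refine ⟨Polynomial.C ⟨_, hW⟩ * q, Polynomial.X * (Polynomial.C e * q + p), ?_, ?_⟩
      · rw [mul_comm Polynomial.X, Polynomial.degree_mul_X, hdeg]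
        rw [← Polynomial.smul_eq_C_mul]
        refine (Polynomial.degree_smul_le _ _).trans_lt ?_
        rw [Polynomial.degree_eq_natDegree hq0]
        exact_mod_cast Nat.lt_succ_self _
      · simp only [map_mul, map_add, Polynomial.aeval_C, Polynomial.aeval_X,
          IntermediateField.algebraMap_apply, he, ← h]
        field_simp
        ring
  have hc : IsAlgebraic E c := by
    obtain ⟨p, q, hpq, h⟩ := key (n - 3) 1 (by omega) le_rfl
    have hq0 : q ≠ 0 := by rintro rfl; simp at hpq
    -- `v₁ q - p` annihilates `c`, and is nonzero because `v₁ ≠ 0` is a constant.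
    have : IsAlgebraic B c := by
      have hv : (⟨v 1, mem hv1⟩ : B) ≠ 0 := by
        intro h; exact hv0 1 le_rfl (by omega) (congrArg Subtype.val h)
      refine ⟨Polynomial.C ⟨v 1, mem hv1⟩ * q - p, ?_, ?_⟩
      · intro h0
        have := Polynomial.degree_C_mul (p := q) hv
        rw [sub_eq_zero.1 h0] at this
        exact hpq.ne this
      · simp [h]
    exact this.restrictScalars E
  have hu : ∀ k, 2 ≤ k → k ≤ n → IsAlgebraic E (u k) := by
    intro k h2 hk
    have := (hw k h2 hk).mul hc.inv
    rwa [mul_comm c, mul_inv_cancel_right₀ hc0] at this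
  refine ⟨hc, hu, ?_⟩
  have hv : ∀ j k, k + j + 1 = n → 1 ≤ k → IsAlgebraic E (v k) := by
    intro j
    induction j with
    | zero =>
      intro k hk hk1
      obtain rfl : k = n - 1 := by omega
      exact hvn
    | succ j ih =>
      intro k hk hk1
      have h1 := ih (k + 1) (by omega) (by omega)
      have h2 := hwh (k + 1) (by omega) (by omega)
      have h3 := hu (k + 1) (by omega) (by omega)
      have h4 := h3.mul (((isAlgebraic_one (R := E)).add h1).sub h2).inv
      simp only [Nat.add_sub_cancel, sub_sub_cancel] at h4
      have hvk := hv0 k hk1 (by omega)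
      have huk := hu0 (k + 1) (by omega) (by omega)
      rwa [inv_div, mul_div_cancel₀ _ huk] at h4
  exact fun k h1 h2 => hv (n - 1 - k) k (by omega) h1

open scoped IntermediateField.algebraAdjoinAdjoin in
theorem isAlgebraic_algebraAdjoin {F A : Type*} [Field F] [Field A] [Algebra F A] (S : Set A)
    (h : Algebra.IsAlgebraic (IntermediateField.adjoin F S) A) :
    Algebra.IsAlgebraic (Algebra.adjoin F S) A :=
  (IsFractionRing.comap_isAlgebraic_iff (K := IntermediateField.adjoin F S)).2 h

theorem const_ne_zero : ((1 - 2 * RatFunc.X) / RatFunc.X : F) ≠ 0 := by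
  refine div_ne_zero ?_ RatFunc.X_ne_zero
  intro h
  have h' : algebraMap (Polynomial ℚ) F (1 - 2 * Polynomial.X) = algebraMap (Polynomial ℚ) F 0 := by
    rw [map_sub, map_one, map_mul, map_ofNat, RatFunc.algebraMap_X, map_zero, h]
  have := congrArg (Polynomial.eval 0) (IsFractionRing.injective (Polynomial ℚ) F h')
  simp at this

theorem Cv_ne_zero (n : ℕ) : Cv n ≠ 0 := by
  simp [Cv]

theorem U_ne_zero (n k : ℕ) (hk : 2 ≤ k) (hkn : k ≤ n) : U n k ≠ 0 := by
  rw [U, dif_pos (show k - 2 < n - 1 by omega)]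
  simp

theorem V_ne_zero (n k : ℕ) (hk : 1 ≤ k) (hkn : k < n) : V n k ≠ 0 := by
  unfold V
  split_ifs with h h'
  · rw [ne_eq, FaithfulSMul.algebraMap_eq_zero_iff]
    exact const_ne_zero
  · simp
  · omega

/-- Each `V_k` is the image of a polynomial in which no `U` occurs, in the weak form that its value
at a point with vanishing `C` and `V` coordinates does not depend on the `U` coordinates. -/
theorem exists_V_eq (n k : ℕ) : ∃ p : MvPolynomial (σ n) F,
    V n k = algebraMap _ (K n) p ∧
    ∀ s t : Fin (n - 1) → F, aeval (Sum.elim (0 : Unit → F) (Sum.elim s 0)) p =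
      aeval (Sum.elim (0 : Unit → F) (Sum.elim t 0)) p := by
  unfold V
  split_ifs with h h'
  · exact ⟨MvPolynomial.C _, IsScalarTower.algebraMap_apply F (MvPolynomial (σ n) F) (K n) _,
      by simp⟩
  · exact ⟨_, rfl, by simp⟩
  · exact ⟨0, by simp, by simp⟩

theorem V_mul_V_ne_U (n k l m : ℕ) (hk : 2 ≤ k) (hkn : k ≤ n) : V n l * V n m ≠ U n k := by
  obtain ⟨p, hp, hp'⟩ := exists_V_eq n l
  obtain ⟨q, hq, hq'⟩ := exists_V_eq n m
  rw [U, dif_pos (show k - 2 < n - 1 by omega), hp, hq, ← map_mul]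
  intro h
  have h := IsFractionRing.injective (MvPolynomial (σ n) F) (K n) h
  have h0 := congrArg (aeval (Sum.elim (0 : Unit → F) (Sum.elim 0 0))) h
  have h1 := congrArg (aeval (Sum.elim (0 : Unit → F) (Sum.elim 1 0))) h
  rw [map_mul, hp' 0 1, hq' 0 1, ← map_mul, h1] at h0
  simp at h0

end Stmt1

/-- The 2n−2 elements `Ŵ₀, …, Ŵ_{n−2}, W₀, …, W_{n−2}` of `K` are algebraically
independent over `ℚ(A₂)`. -/
theorem stmt1 (n : ℕ) (hn : 3 ≤ n) :
    AlgebraicIndependent Stmt1.F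
      (Sum.elim (fun j : Fin (n - 1) => Stmt1.Wh n j)
        (fun j : Fin (n - 1) => Stmt1.W n j)) := by
  set x := (Sum.elim (fun j : Fin (n - 1) => Stmt1.Wh n j)
        (fun j : Fin (n - 1) => Stmt1.W n j)) with hx
  have : Algebra.IsAlgebraic (MvPolynomial (Stmt1.σ n) Stmt1.F) (Stmt1.K n) :=
    IsLocalization.isAlgebraic _ (nonZeroDivisors (MvPolynomial (Stmt1.σ n) Stmt1.F))
  have hbasis : IsTranscendenceBasis Stmt1.F
      (algebraMap (MvPolynomial (Stmt1.σ n) Stmt1.F) (Stmt1.K n) ∘ X) :=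
    (IsTranscendenceBasis.mvPolynomial (Stmt1.σ n) Stmt1.F).algebraMap_comp
  let E := IntermediateField.adjoin Stmt1.F (Set.range x)
  have hxE : ∀ i, IsAlgebraic E (x i) := fun i =>
    isAlgebraic_algebraMap (⟨x i, IntermediateField.subset_adjoin _ _ ⟨i, rfl⟩⟩ : E)
  have hV1 : IsAlgebraic E (Stmt1.V n 1) := by
    rw [Stmt1.V, if_pos rfl, IsScalarTower.algebraMap_apply Stmt1.F E (Stmt1.K n)]
    exact isAlgebraic_algebraMap _
  obtain ⟨hC, hU, hV⟩ := Stmt1.core (E := E) n hn (Stmt1.Cv n) (Stmt1.U n) (Stmt1.V n) hV1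
    (by simpa [hx, Stmt1.Wh] using hxE (Sum.inl ⟨0, by omega⟩))
    (fun k h2 hk => by
      have := hxE (Sum.inr ⟨n - k, by omega⟩)
      simpa [hx, Stmt1.W, Nat.sub_sub_self hk] using this)
    (fun k h2 hk => by
      have := hxE (Sum.inl ⟨n - k, by omega⟩)
      simpa [hx, Stmt1.Wh, Nat.sub_sub_self hk.le, Nat.sub_ne_zero_of_lt hk] using this)
    (Stmt1.Cv_ne_zero n) (Stmt1.V_ne_zero n)
    (fun k h2 hk => Stmt1.U_ne_zero n k h2 hk.le)
    (fun k h2 hk => Stmt1.V_mul_V_ne_U n k _ _ h2 hk.le)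
  have halgE : Algebra.IsAlgebraic E (Stmt1.K n) := by
    rw [hbasis.isAlgebraic_iff]
    rintro (⟨⟩ | i | i)
    · exact hC
    · have := hU (i + 2) (by omega) (by omega)
      simpa [Stmt1.U] using this
    · have := hV (i + 2) (by omega) (by omega)
      simpa [Stmt1.V] using this
  have halg : Algebra.IsAlgebraic (Algebra.adjoin Stmt1.F (Set.range x)) (Stmt1.K n) :=
    Stmt1.isAlgebraic_algebraAdjoin _ halgE
  refine (Algebra.IsAlgebraic.isTranscendenceBasis_of_le_trdeg_of_finite Stmt1.F x ?_).1
  rw [← hbasis.cardinalMk_eq_trdeg]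
  simp only [Cardinal.mk_fintype, Fintype.card_sum, Fintype.card_fin, Fintype.card_unit]
  exact_mod_cast (by omega)
end
end

section
/- Let n ≥ 3 be an integer. In the rational function field ℚ(A₂)(C, A₃, …, Aₙ, B₂, …, Bₙ) over ℚ(A₂), set A₁ = A₂, M_k = 1 − (A₁ + A₂ + ⋯ + A_k) for 2 ≤ k ≤ n+1 where A_{n+1} = M_n (so that M_{n+1} = 0), and N_k = A₁ + B₂ + ⋯ + B_k for 1 ≤ k ≤ n (so N₁ = A₁). Define U_k = M_k/N_k and V_k = M_{k+1}/N_k for 2 ≤ k ≤ n. Then ℚ(A₂)(U₂, …, Uₙ, V₂, …, V_{n−1}) = ℚ(A₂)(A₃, …, Aₙ, B₂, …, Bₙ) as subfields, and in particular the 2n−3 elements U₂, …, Uₙ, V₂, …, V_{n−1} are algebraically independent over ℚ(A₂). -/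
/-!
Since `M₂ = 1 − 2A₂` is a nonzero constant, `U₂ = M₂/N₂` determines `N₂`, and then alternately
`M_{k+1} = V_k N_k` and `N_{k+1} = M_{k+1}/U_{k+1}`. Hence all `M_k`, `N_k` with `2 ≤ k ≤ n` lie in
the field generated by the `U_k` and `V_k` (`MN_mem`), and so do the differences `A_k` and
`B_k`; this gives the nontrivial inclusion of subfields. The divisions need `M_k ≠ 0` and
`N_k ≠ 0`, which hold because both are polynomials in the indeterminates with nonzero values
`1 − 2A₂` and `A₂` at the origin (`M_ne_zero`, `N_ne_zero`).

Algebraic independence follows by counting: the field generated by `2n − 3` elements contains the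
`2n − 3` algebraically independent elements `A₃, …, Aₙ, B₂, …, Bₙ`, so its transcendence degree is
at least `2n − 3` and the generators form a transcendence basis (`algebraicIndependent_of_adjoin`).
-/


/- STATEMENT 2: In ℚ(A₂)(C, A₃, …, Aₙ, B₂, …, Bₙ) (n ≥ 3), with A₁ = A₂,
M_k = 1 − (A₁ + ⋯ + A_k) (2 ≤ k ≤ n+1, where A_{n+1} = M_n so M_{n+1} = 0),
N_k = A₁ + B₂ + ⋯ + B_k (1 ≤ k ≤ n), U_k = M_k/N_k and V_k = M_{k+1}/N_k
(2 ≤ k ≤ n): the subfields ℚ(A₂)(U₂, …, Uₙ, V₂, …, V_{n−1}) and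
ℚ(A₂)(A₃, …, Aₙ, B₂, …, Bₙ) coincide, and U₂, …, Uₙ, V₂, …, V_{n−1} are
algebraically independent over ℚ(A₂). -/

noncomputable section
open MvPolynomial Finset

namespace Stmt2

/-- The base field `ℚ(A₂)`. -/
abbrev F := RatFunc ℚ

/-- Index type for the indeterminates `C`, `A₃, …, Aₙ`, `B₂, …, Bₙ`. -/
abbrev σ (n : ℕ) := Unit ⊕ (Fin (n - 2) ⊕ Fin (n - 1))

/-- The rational function field `ℚ(A₂)(C, A₃, …, Aₙ, B₂, …, Bₙ)`. -/
abbrev K (n : ℕ) := FractionRing (MvPolynomial (σ n) F)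

variable (n : ℕ)

/-- The element `A₂` of the base field viewed in `K`. -/
def a2 : K n := algebraMap F (K n) RatFunc.X

/-- The indeterminate `A_k` for `3 ≤ k ≤ n` (junk value 0 outside this range). -/
def Araw (k : ℕ) : K n :=
  if h : k - 3 < n - 2 then
    algebraMap (MvPolynomial (σ n) F) (K n) (X (Sum.inr (Sum.inl ⟨k - 3, h⟩))) else 0

/-- `A₁ = A₂ ∈ ℚ(A₂)`; `A₃, …, Aₙ` are the indeterminates; `A_{n+1} = M_n =
1 − (A₁ + A₂ + ⋯ + Aₙ)`. -/
def A (k : ℕ) : K n :=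
  if k = 0 then 0
  else if k ≤ 2 then a2 n
  else if k ≤ n then Araw n k
  else if k = n + 1 then 1 - (2 * a2 n + ∑ i ∈ Icc 3 n, Araw n i)
  else 0

/-- The indeterminate `B_k` for `2 ≤ k ≤ n` (junk value 0 outside this range). -/
def B (k : ℕ) : K n :=
  if h : k - 2 < n - 1 then
    algebraMap (MvPolynomial (σ n) F) (K n) (X (Sum.inr (Sum.inr ⟨k - 2, h⟩))) else 0

/-- `M_k = 1 − (A₁ + A₂ + ⋯ + A_k)`. -/
def M (k : ℕ) : K n := 1 - ∑ i ∈ Icc 1 k, A n i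

/-- `N_k = A₁ + B₂ + ⋯ + B_k`. -/
def N (k : ℕ) : K n := A n 1 + ∑ i ∈ Icc 2 k, B n i

/-- `U_k = M_k / N_k`. -/
def U (k : ℕ) : K n := M n k / N n k

/-- `V_k = M_{k+1} / N_k`. -/
def V (k : ℕ) : K n := M n (k + 1) / N n k

end Stmt2

namespace Stmt2

/-- A finite family generating a field that contains an algebraically independent family of the
same size is itself algebraically independent. -/
theorem algebraicIndependent_of_adjoin {k L : Type} [Field k] [Field L] [Algebra k L]
    {ι : Type} [Finite ι] (x y : ι → L) (hy : AlgebraicIndependent k y)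
    (h : ∀ i, y i ∈ IntermediateField.adjoin k (Set.range x)) : AlgebraicIndependent k x := by
  let E := IntermediateField.adjoin k (Set.range x)
  have hxE : ∀ i, x i ∈ E := fun i => IntermediateField.subset_adjoin _ _ ⟨i, rfl⟩
  let x' : ι → E := fun i => ⟨x i, hxE i⟩
  let y' : ι → E := fun i => ⟨y i, h i⟩
  have hy' : AlgebraicIndependent k y' := AlgebraicIndependent.of_comp E.val hy
  have halg : Algebra.IsAlgebraic (Algebra.adjoin k (Set.range x')) E := by
    constructor
    rintro ⟨z, hz⟩
    induction hz using IntermediateField.adjoin_induction with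
    | mem z hz =>
      obtain ⟨i, rfl⟩ := hz
      exact isAlgebraic_algebraMap
        (⟨x' i, Algebra.subset_adjoin ⟨i, rfl⟩⟩ : Algebra.adjoin k (Set.range x'))
    | algebraMap c =>
      exact isAlgebraic_algebraMap
        (algebraMap k (Algebra.adjoin k (Set.range x')) c)
    | add a b ha hb iha ihb => exact iha.add ihb
    | mul a b ha hb iha ihb => exact iha.mul ihb
    | inv a ha iha => exact iha.inv
  have hb := Algebra.IsAlgebraic.isTranscendenceBasis_of_le_trdeg_of_finite k x'
    hy'.cardinalMk_le_trdeg
  exact hb.1.map' (f := E.val) E.val.injective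

variable (n : ℕ)

/-- The polynomial ring underlying `K n`. -/
abbrev P := MvPolynomial (σ n) F

/-- The specialization of all indeterminates at `0`. -/
abbrev ev : P n →ₐ[F] F := aeval (fun _ => 0)

/-- A polynomial with nonzero value at the origin is nonzero in `K n`. -/
theorem ne_zero_of_ev {z : K n} (p : P n) (hz : algebraMap (P n) (K n) p = z)
    (hp : ev n p ≠ 0) : z ≠ 0 := by
  rintro rfl
  rw [map_eq_zero_iff _ (IsFractionRing.injective (P n) (K n))] at hz
  simp [hz] at hp

theorem A_one : A n 1 = algebraMap (P n) (K n) (C RatFunc.X) := by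
  simp only [A, a2]
  norm_num
  exact IsScalarTower.algebraMap_apply F (P n) (K n) _

theorem A_two : A n 2 = algebraMap (P n) (K n) (C RatFunc.X) := by
  simp only [A, a2]
  norm_num
  exact IsScalarTower.algebraMap_apply F (P n) (K n) _

theorem A_eq {k : ℕ} (h3 : 3 ≤ k) (hk : k ≤ n) :
    A n k = algebraMap (P n) (K n) (X (Sum.inr (Sum.inl ⟨k - 3, by omega⟩))) := by
  simp only [A, Araw]
  rw [if_neg (by omega), if_neg (by omega), if_pos hk, dif_pos (by omega)]

theorem B_eq {k : ℕ} (h2 : 2 ≤ k) (hk : k ≤ n) :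
    B n k = algebraMap (P n) (K n) (X (Sum.inr (Sum.inr ⟨k - 2, by omega⟩))) := by
  simp only [B]
  rw [dif_pos (by omega)]

theorem M_two : M n 2 = algebraMap F (K n) (1 - 2 * RatFunc.X) := by
  have : Icc 1 2 = ({1, 2} : Finset ℕ) := rfl
  rw [M, this, sum_pair (by norm_num), A_one, A_two,
    IsScalarTower.algebraMap_apply F (P n) (K n), algebraMap_eq]
  simp only [map_sub, map_mul, map_one, map_ofNat]
  ring

theorem M_succ (k : ℕ) : M n (k + 1) = M n k - A n (k + 1) := by
  rw [M, M, sum_Icc_succ_top (by omega)]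
  ring

theorem N_succ {k : ℕ} (hk : 1 ≤ k) : N n (k + 1) = N n k + B n (k + 1) := by
  rw [N, N, sum_Icc_succ_top (by omega)]
  ring

theorem one_sub_two_X_ne_zero : (1 - 2 * RatFunc.X : F) ≠ 0 := by
  have h : (1 - 2 * RatFunc.X : F)
      = algebraMap (Polynomial ℚ) F (1 - Polynomial.C 2 * Polynomial.X) := by
    simp
  rw [h, map_ne_zero_iff _ (RatFunc.algebraMap_injective ℚ)]
  intro h0
  have := congrArg (Polynomial.eval 0) h0
  simp at this

/-- `M_k` is a polynomial with value `1 − 2A₂` at the origin. -/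
theorem M_poly {k : ℕ} (h2 : 2 ≤ k) (hk : k ≤ n) :
    ∃ p : P n, algebraMap (P n) (K n) p = M n k ∧ ev n p = 1 - 2 * RatFunc.X := by
  induction k, h2 using Nat.le_induction with
  | base =>
    refine ⟨C (1 - 2 * RatFunc.X), ?_, by simp⟩
    rw [M_two, IsScalarTower.algebraMap_apply F (P n) (K n), algebraMap_eq]
  | succ k h2 ih =>
    obtain ⟨p, hp, hp'⟩ := ih (by omega)
    refine ⟨p - X (Sum.inr (Sum.inl ⟨k + 1 - 3, by omega⟩)), ?_, ?_⟩
    · rw [M_succ, A_eq n (by omega) hk, map_sub, hp]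
    · rw [map_sub, hp']
      simp

theorem M_ne_zero {k : ℕ} (h2 : 2 ≤ k) (hk : k ≤ n) : M n k ≠ 0 := by
  obtain ⟨p, hp, hp'⟩ := M_poly n h2 hk
  exact ne_zero_of_ev n p hp (hp' ▸ one_sub_two_X_ne_zero)

theorem N_one : N n 1 = A n 1 := by
  simp [N]

/-- `N_k` is a polynomial with value `A₂` at the origin. -/
theorem N_poly {k : ℕ} (h1 : 1 ≤ k) (hk : k ≤ n) :
    ∃ p : P n, algebraMap (P n) (K n) p = N n k ∧ ev n p = RatFunc.X := by
  induction k, h1 using Nat.le_induction with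
  | base => exact ⟨C RatFunc.X, by rw [N_one, A_one], by simp⟩
  | succ k h1 ih =>
    obtain ⟨p, hp, hp'⟩ := ih (by omega)
    refine ⟨p + X (Sum.inr (Sum.inr ⟨k + 1 - 2, by omega⟩)), ?_, ?_⟩
    · rw [N_succ n h1, B_eq n (by omega) hk, map_add, hp]
    · rw [map_add, hp']
      simp

theorem N_ne_zero {k : ℕ} (h1 : 1 ≤ k) (hk : k ≤ n) : N n k ≠ 0 := by
  obtain ⟨p, hp, hp'⟩ := N_poly n h1 hk
  exact ne_zero_of_ev n p hp (hp' ▸ RatFunc.X_ne_zero)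

theorem A_one_mem (L : IntermediateField F (K n)) : A n 1 ∈ L := by
  rw [A_one, ← algebraMap_eq, ← IsScalarTower.algebraMap_apply F (P n) (K n)]
  exact L.algebraMap_mem _

theorem M_two_mem (L : IntermediateField F (K n)) : M n 2 ∈ L := by
  rw [M_two]
  exact L.algebraMap_mem _

/-- The alternating recursion recovering `M_k` and `N_k` from the `U_k` and `V_k`. -/
theorem MN_mem (L : IntermediateField F (K n)) (hU : ∀ k, 2 ≤ k → k ≤ n → U n k ∈ L)
    (hV : ∀ k, 2 ≤ k → k ≤ n - 1 → V n k ∈ L) {k : ℕ} (h2 : 2 ≤ k) (hk : k ≤ n) :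
    M n k ∈ L ∧ N n k ∈ L := by
  have key : ∀ j, 2 ≤ j → j ≤ n → M n j ∈ L → N n j ∈ L := by
    intro j h2 hj hM
    have : N n j = M n j / U n j := by
      rw [U, div_div_cancel₀ (M_ne_zero n h2 hj)]
    rw [this]
    exact L.div_mem hM (hU j h2 hj)
  induction k, h2 using Nat.le_induction with
  | base => exact ⟨M_two_mem n L, key 2 le_rfl hk (M_two_mem n L)⟩
  | succ k h2 ih =>
    have hM : M n (k + 1) ∈ L := by
      have : M n (k + 1) = V n k * N n k := by
        rw [V, div_mul_cancel₀ _ (N_ne_zero n (by omega) (by omega))]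
      rw [this]
      exact L.mul_mem (hV k h2 (by omega)) (ih (by omega)).2
    exact ⟨hM, key _ (by omega) hk hM⟩

theorem AB_mem (L : IntermediateField F (K n)) (hU : ∀ k, 2 ≤ k → k ≤ n → U n k ∈ L)
    (hV : ∀ k, 2 ≤ k → k ≤ n - 1 → V n k ∈ L) :
    (∀ k, 3 ≤ k → k ≤ n → A n k ∈ L) ∧ (∀ k, 2 ≤ k → k ≤ n → B n k ∈ L) := by
  constructor
  · intro k h3 hk
    obtain ⟨j, rfl⟩ : ∃ j, k = j + 1 := ⟨k - 1, by omega⟩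
    have : A n (j + 1) = M n j - M n (j + 1) := by rw [M_succ]; ring
    rw [this]
    exact L.sub_mem (MN_mem n L hU hV (by omega) (by omega)).1
      (MN_mem n L hU hV (by omega) hk).1
  · intro k h2 hk
    obtain ⟨j, rfl⟩ : ∃ j, k = j + 1 := ⟨k - 1, by omega⟩
    have : B n (j + 1) = N n (j + 1) - N n j := by rw [N_succ n (by omega)]; ring
    rw [this]
    refine L.sub_mem (MN_mem n L hU hV (by omega) hk).2 ?_
    rcases Nat.lt_or_ge j 2 with hj | hj
    · obtain rfl : j = 1 := by omega
      rw [N_one]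
      exact A_one_mem n L
    · exact (MN_mem n L hU hV hj (by omega)).2

theorem M_mem (L : IntermediateField F (K n)) (hA : ∀ k, 3 ≤ k → k ≤ n → A n k ∈ L)
    {k : ℕ} (h2 : 2 ≤ k) (hk : k ≤ n) : M n k ∈ L := by
  induction k, h2 using Nat.le_induction with
  | base => exact M_two_mem n L
  | succ k h2 ih =>
    rw [M_succ]
    exact L.sub_mem (ih (by omega)) (hA _ (by omega) hk)

theorem N_mem (L : IntermediateField F (K n)) (hB : ∀ k, 2 ≤ k → k ≤ n → B n k ∈ L)
    {k : ℕ} (hk : k ≤ n) : N n k ∈ L := by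
  refine L.add_mem (A_one_mem n L) (L.sum_mem fun i hi => ?_)
  rw [mem_Icc] at hi
  exact hB i hi.1 (hi.2.trans hk)

/-- The indeterminates `B₂, …, Bₙ, A₃, …, Aₙ` are algebraically independent. -/
theorem algebraicIndependent_BA : AlgebraicIndependent F
    (Sum.elim (fun j : Fin (n - 1) => B n (j + 2)) (fun j : Fin (n - 2) => A n (j + 3))) := by
  have h := ((algebraicIndependent_X (σ n) F).map'
    (f := IsScalarTower.toAlgHom F (P n) (K n)) (IsFractionRing.injective (P n) (K n))).comp
    (fun i : Fin (n - 1) ⊕ Fin (n - 2) => (Sum.inr i.swap : σ n))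
    (Sum.inr_injective.comp Sum.swap_leftInverse.injective)
  convert! h using 1
  funext i
  rcases i with j | j
  · simpa using B_eq n (k := j + 2) (by omega) (by omega)
  · simpa using A_eq n (k := j + 3) (by omega) (by omega)

end Stmt2

/-- `ℚ(A₂)(U₂, …, Uₙ, V₂, …, V_{n−1}) = ℚ(A₂)(A₃, …, Aₙ, B₂, …, Bₙ)` as subfields
of `K`, and the 2n−3 elements `U₂, …, Uₙ, V₂, …, V_{n−1}` are algebraically
independent over `ℚ(A₂)`. -/
theorem stmt2 (n : ℕ) (hn : 3 ≤ n) :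
    IntermediateField.adjoin Stmt2.F
        ((fun k => Stmt2.U n k) '' Set.Icc 2 n ∪ (fun k => Stmt2.V n k) '' Set.Icc 2 (n - 1))
      = IntermediateField.adjoin Stmt2.F
        ((fun k => Stmt2.A n k) '' Set.Icc 3 n ∪ (fun k => Stmt2.B n k) '' Set.Icc 2 n)
    ∧ AlgebraicIndependent Stmt2.F
        (Sum.elim (fun j : Fin (n - 1) => Stmt2.U n (j + 2))
          (fun j : Fin (n - 2) => Stmt2.V n (j + 2))) := by
  constructor
  · apply le_antisymm
    · set L := IntermediateField.adjoin Stmt2.F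
        ((fun k => Stmt2.A n k) '' Set.Icc 3 n ∪ (fun k => Stmt2.B n k) '' Set.Icc 2 n) with hL
      have hA : ∀ k, 3 ≤ k → k ≤ n → Stmt2.A n k ∈ L := fun k h3 hk =>
        IntermediateField.subset_adjoin _ _ (Or.inl ⟨k, ⟨h3, hk⟩, rfl⟩)
      have hB : ∀ k, 2 ≤ k → k ≤ n → Stmt2.B n k ∈ L := fun k h2 hk =>
        IntermediateField.subset_adjoin _ _ (Or.inr ⟨k, ⟨h2, hk⟩, rfl⟩)
      rw [IntermediateField.adjoin_le_iff]
      rintro _ (⟨k, ⟨h2, hk⟩, rfl⟩ | ⟨k, ⟨h2, hk⟩, rfl⟩)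
      · exact L.div_mem (Stmt2.M_mem n L hA h2 hk) (Stmt2.N_mem n L hB hk)
      · exact L.div_mem (Stmt2.M_mem n L hA (by omega) (by omega))
          (Stmt2.N_mem n L hB (by omega))
    · set L := IntermediateField.adjoin Stmt2.F
        ((fun k => Stmt2.U n k) '' Set.Icc 2 n ∪ (fun k => Stmt2.V n k) '' Set.Icc 2 (n - 1))
        with hL
      have hAB := Stmt2.AB_mem n L
        (fun k h2 hk => IntermediateField.subset_adjoin _ _ (Or.inl ⟨k, ⟨h2, hk⟩, rfl⟩))
        (fun k h2 hk => IntermediateField.subset_adjoin _ _ (Or.inr ⟨k, ⟨h2, hk⟩, rfl⟩))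
      rw [IntermediateField.adjoin_le_iff]
      rintro _ (⟨k, ⟨h2, hk⟩, rfl⟩ | ⟨k, ⟨h2, hk⟩, rfl⟩)
      · exact hAB.1 k h2 hk
      · exact hAB.2 k h2 hk
  · refine Stmt2.algebraicIndependent_of_adjoin _ _ (Stmt2.algebraicIndependent_BA n) ?_
    set x := Sum.elim (fun j : Fin (n - 1) => Stmt2.U n (j + 2))
      (fun j : Fin (n - 2) => Stmt2.V n (j + 2)) with hx
    have hAB := Stmt2.AB_mem n (IntermediateField.adjoin Stmt2.F (Set.range x))
      (fun k h2 hk => IntermediateField.subset_adjoin _ _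
        ⟨Sum.inl ⟨k - 2, by omega⟩, by simp [hx, Nat.sub_add_cancel h2]⟩)
      (fun k h2 hk => IntermediateField.subset_adjoin _ _
        ⟨Sum.inr ⟨k - 2, by omega⟩, by simp [hx, Nat.sub_add_cancel h2]⟩)
    rintro (j | j)
    · exact hAB.2 _ (by omega) (by omega)
    · exact hAB.1 _ (by omega) (by omega)
end
end

section
/- Let n ≥ 3 be an integer and let K = ℚ(A₂)(U₂, …, Uₙ, V₂, …, V_{n−1}) be the rational function field in the 2n−3 indeterminates U₂, …, Uₙ, V₂, …, V_{n−1} over ℚ(A₂). Set V₁ = (1 − 2A₂)/A₂ and define ŵ_{n−k} = 1 + V_k − U_k/V_{k−1} for 2 ≤ k ≤ n−1 and w_{n−k} = U_k for 2 ≤ k ≤ n. Then the 2n−3 elements ŵ₁, …, ŵ_{n−2}, w₀, …, w_{n−2} are algebraically independent over ℚ(A₂). -/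
/-!
Let `L ⊆ K` be the subfield generated over `ℚ(A₂)` by the given elements. It contains every
`U_k = w_{n-k}`, and it contains `V₁ ∈ ℚ(A₂)`; since `V_k = ŵ_{n-k} - 1 + U_k / V_{k-1}`, induction
on `k` puts every `V_k` in `L`. Hence `L = K`. As `K` has transcendence degree `2n - 3` over
`ℚ(A₂)`, a generating family with `2n - 3` members is a transcendence basis, and in particular is
algebraically independent.
-/

/- STATEMENT 4: In K = ℚ(A₂)(U₂, …, Uₙ, V₂, …, V_{n−1}) (n ≥ 3), with
V₁ = (1−2A₂)/A₂, ŵ_{n−k} = 1 + V_k − U_k/V_{k−1} (2 ≤ k ≤ n−1) and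
w_{n−k} = U_k (2 ≤ k ≤ n), the 2n−3 elements ŵ₁, …, ŵ_{n−2}, w₀, …, w_{n−2}
are algebraically independent over ℚ(A₂). -/

noncomputable section
open MvPolynomial Finset

namespace StmtK

/-- The base field `ℚ(A₂)`. -/
abbrev F := RatFunc ℚ

/-- Index type for the 2n−3 indeterminates `U₂, …, Uₙ`, `V₂, …, V_{n-1}`. -/
abbrev σ (n : ℕ) := Fin (n - 1) ⊕ Fin (n - 2)

/-- The rational function field `ℚ(A₂)(U₂, …, Uₙ, V₂, …, V_{n-1})`. -/
abbrev K (n : ℕ) := FractionRing (MvPolynomial (σ n) F)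

variable (n : ℕ)

/-- The indeterminate `U_k` for `2 ≤ k ≤ n` (junk value 0 outside this range). -/
def U (k : ℕ) : K n :=
  if h : k - 2 < n - 1 then
    algebraMap (MvPolynomial (σ n) F) (K n) (X (Sum.inl ⟨k - 2, h⟩)) else 0

/-- `V₁ = (1 − 2A₂)/A₂ ∈ ℚ(A₂)`, and the indeterminate `V_k` for `2 ≤ k ≤ n-1`
(junk value 0 outside this range). -/
def V (k : ℕ) : K n :=
  if k = 1 then algebraMap F (K n) ((1 - 2 * RatFunc.X) / RatFunc.X)
  else if h : k - 2 < n - 2 then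
    algebraMap (MvPolynomial (σ n) F) (K n) (X (Sum.inr ⟨k - 2, h⟩)) else 0

/-- `ŵ₀ = V_{n-1}` and `ŵ_{n-k} = 1 + V_k − U_k/V_{k-1}` for `2 ≤ k ≤ n-1`. -/
def wh (j : ℕ) : K n :=
  if j = 0 then V n (n - 1)
  else 1 + V n (n - j) - U n (n - j) / V n (n - j - 1)

/-- `w_{n-k} = U_k` for `2 ≤ k ≤ n`. -/
def w (j : ℕ) : K n := U n (n - j)

end StmtK

namespace StmtK

/-- The family in question, indexed as in the theorem. -/
abbrev family (n : ℕ) : Fin (n - 2) ⊕ Fin (n - 1) → K n :=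
  Sum.elim (fun j : Fin (n - 2) => wh n (j + 1)) (fun j : Fin (n - 1) => w n j)

/-- The subfield of `K` generated over `ℚ(A₂)` by the family. -/
abbrev L (n : ℕ) : IntermediateField F (K n) :=
  IntermediateField.adjoin F (Set.range (family n))

lemma U_mem (n k : ℕ) (hk : 2 ≤ k) (hkn : k ≤ n) : U n k ∈ L n := by
  apply IntermediateField.subset_adjoin
  refine ⟨Sum.inr ⟨n - k, by omega⟩, ?_⟩
  simp only [family, Sum.elim_inr, w]
  congr 1
  omega

/-- The recursion `V_k = ŵ_{n-k} - 1 + U_k / V_{k-1}` keeps every `V_k` inside `L`. -/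
lemma V_mem (n k : ℕ) (hk : 1 ≤ k) (hkn : k ≤ n - 1) : V n k ∈ L n := by
  induction k, hk using Nat.le_induction with
  | base =>
    simp only [V, if_true]
    exact (L n).algebraMap_mem _
  | succ k hk ih =>
    have hwh : wh n (n - (k + 1) - 1 + 1) ∈ L n :=
      IntermediateField.subset_adjoin _ _ ⟨Sum.inl ⟨n - (k + 1) - 1, by omega⟩, rfl⟩
    have e : n - (n - (k + 1) - 1 + 1) = k + 1 := by omega
    have hrec : V n (k + 1) =
        wh n (n - (k + 1) - 1 + 1) - 1 + U n (k + 1) / V n k := by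
      rw [wh, if_neg (Nat.succ_ne_zero _), e, Nat.add_sub_cancel]
      ring
    rw [hrec]
    exact add_mem (sub_mem hwh (one_mem _))
      (div_mem (U_mem n (k + 1) (by omega) (by omega)) (ih (by omega)))

lemma X_mem (n : ℕ) (i : σ n) : algebraMap (MvPolynomial (σ n) F) (K n) (X i) ∈ L n := by
  rcases i with i | i
  · have h := U_mem n (i + 2) (by omega) (by omega)
    simpa [U] using h
  · have h := V_mem n (i + 2) (by omega) (by omega)
    simpa [V] using h

lemma L_eq_top (n : ℕ) : L n = ⊤ := by
  rw [eq_top_iff]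
  have hpoly (p : MvPolynomial (σ n) F) : algebraMap _ (K n) p ∈ L n := by
    induction p using MvPolynomial.induction_on with
    | C a =>
      rw [← MvPolynomial.algebraMap_eq, ← IsScalarTower.algebraMap_apply F _ (K n)]
      exact (L n).algebraMap_mem a
    | add p q hp hq => rw [map_add]; exact add_mem hp hq
    | mul_X p i hp => rw [map_mul]; exact mul_mem hp (X_mem n i)
  intro x _
  obtain ⟨p, q, -, rfl⟩ := IsFractionRing.div_surjective (A := MvPolynomial (σ n) F) x
  exact div_mem (hpoly p) (hpoly q)

lemma card_le_trdeg (n : ℕ) :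
    Cardinal.mk (Fin (n - 2) ⊕ Fin (n - 1)) ≤ Algebra.trdeg F (K n) := by
  have h := trdeg_le_of_injective (IsScalarTower.toAlgHom F (MvPolynomial (σ n) F) (K n))
    (IsFractionRing.injective (MvPolynomial (σ n) F) (K n))
  rw [MvPolynomial.trdeg_of_isDomain] at h
  simpa [add_comm] using h

end StmtK

/-- The 2n−3 elements `ŵ₁, …, ŵ_{n−2}, w₀, …, w_{n−2}` are algebraically
independent over `ℚ(A₂)`. -/
theorem stmt4 (n : ℕ) (hn : 3 ≤ n) :
    AlgebraicIndependent StmtK.F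
      (Sum.elim (fun j : Fin (n - 2) => StmtK.wh n (j + 1))
        (fun j : Fin (n - 1) => StmtK.w n j)) := by
  have htop : Algebra.IsAlgebraic (⊤ : IntermediateField StmtK.F (StmtK.K n)) (StmtK.K n) :=
    ⟨fun x => isAlgebraic_algebraMap (⟨x, trivial⟩ : (⊤ : IntermediateField StmtK.F (StmtK.K n)))⟩
  rw [← StmtK.L_eq_top n, IntermediateField.isAlgebraic_adjoin_iff_top] at htop
  exact (Algebra.IsAlgebraic.isTranscendenceBasis_of_le_trdeg_of_finite StmtK.F (StmtK.family n)
    (StmtK.card_le_trdeg n)).1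
end
end

section
/- Let n ≥ 3 be an integer and let K = ℚ(A₂)(U₂, …, Uₙ, V₂, …, V_{n−1}) be the rational function field in the indeterminates U₂, …, Uₙ, V₂, …, V_{n−1} over ℚ(A₂). Set V₁ = (1 − 2A₂)/A₂, and define ŵ₀ = V_{n−1} and ŵ_{n−k} = 1 + V_k − U_k/V_{k−1} for 2 ≤ k ≤ n−1. Let L = ℚ(A₂)(U₃, …, U_{n−1}) ⊆ K. Then the n−1 elements ŵ₀, ŵ₁, …, ŵ_{n−2} generate over L the field L(U₂, V₂, V₃, …, V_{n−1}), i.e. L(ŵ₀, ŵ₁, …, ŵ_{n−2}) = L(U₂, V₂, …, V_{n−1}). -/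
/-! The relation `ŵ_{n-k} = 1 + V_k − U_k/V_{k-1}` can be solved for either `V_{k-1}` or `U_k`.
Starting from `V_{n-1} = ŵ₀`, descending induction on `k` recovers
`V_{k-1} = U_k/(1 + V_k − ŵ_{n-k})` for `3 ≤ k ≤ n-1`, where `U_k` is a nonzero element of `L`
(`V_mem`). The last relation, `k = 2`, gives `U₂ = (1 + V₂ − ŵ_{n-2}) V₁`, because `V₁` is a nonzero
element of `ℚ(A₂)`. The reverse inclusion is read off from the definition of the `ŵ_j`. -/

/- STATEMENT 5: In K = ℚ(A₂)(U₂, …, Uₙ, V₂, …, V_{n−1}) (n ≥ 3), with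
V₁ = (1−2A₂)/A₂, ŵ₀ = V_{n−1}, ŵ_{n−k} = 1 + V_k − U_k/V_{k−1} (2 ≤ k ≤ n−1),
and L = ℚ(A₂)(U₃, …, U_{n−1}): L(ŵ₀, ŵ₁, …, ŵ_{n−2}) = L(U₂, V₂, …, V_{n−1}). -/

noncomputable section
open MvPolynomial Finset

namespace StmtK

lemma U_ne_zero {n k : ℕ} (hk : k - 2 < n - 1) : U n k ≠ 0 := by
  rw [U, dif_pos hk]
  exact (map_ne_zero_iff _ (IsFractionRing.injective (MvPolynomial (σ n) F) (K n))).2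
    (MvPolynomial.X_ne_zero _)

lemma V_one (n : ℕ) : V n 1 = algebraMap F (K n) ((1 - 2 * RatFunc.X) / RatFunc.X) := by
  rw [V, if_pos rfl]

lemma V_one_ne_zero (n : ℕ) : V n 1 ≠ 0 := by
  rw [V_one]
  refine (map_ne_zero_iff _ (algebraMap F (K n)).injective).2
    (div_ne_zero ?_ RatFunc.X_ne_zero)
  -- `1 - 2 A₂` is the image of a polynomial with value `1` at `0`.
  have h : (1 - 2 * RatFunc.X : RatFunc ℚ)
      = algebraMap (Polynomial ℚ) (RatFunc ℚ) (1 - 2 * Polynomial.X) := by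
    rw [map_sub, map_mul, map_one, map_ofNat, RatFunc.algebraMap_X]
  rw [h]
  refine (map_ne_zero_iff _ (RatFunc.algebraMap_injective ℚ)).2 fun h0 => ?_
  simpa using congrArg (Polynomial.eval 0) h0

lemma wh_zero (n : ℕ) : wh n 0 = V n (n - 1) := by
  rw [wh, if_pos rfl]

lemma wh_sub {n k : ℕ} (hk : k < n) : wh n (n - k) = 1 + V n k - U n k / V n (k - 1) := by
  rw [wh, if_neg (by omega), Nat.sub_sub_self hk.le]

/-- Descending induction recovering the `V_k` from the `ŵ_j` and `U₃, …, U_{n-1}`;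
here `k = n - 1 - i`. -/
lemma V_mem_s5 {n : ℕ} (E : IntermediateField F (K n))
    (hU : ∀ k, 3 ≤ k → k ≤ n - 1 → U n k ∈ E) (hw : ∀ j, j < n - 1 → wh n j ∈ E) (i : ℕ)
    (hi : i + 3 ≤ n) : V n (n - 1 - i) ∈ E := by
  induction i with
  | zero =>
    rw [Nat.sub_zero, ← wh_zero]
    exact hw 0 (by omega)
  | succ i ih =>
    obtain ⟨k, hk⟩ : ∃ k, k = n - 1 - i := ⟨_, rfl⟩
    have hV : V n k ∈ E := hk ▸ ih (by omega)
    have hUk := hU k (by omega) (by omega)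
    have hwk := hw (n - k) (by omega)
    have hq : U n k / V n (k - 1) = 1 + V n k - wh n (n - k) := by
      rw [wh_sub (by omega)]; ring
    have hs : V n (k - 1) = U n k / (1 + V n k - wh n (n - k)) := by
      rw [← hq, div_div_cancel₀ (U_ne_zero (by omega))]
    rw [show n - 1 - (i + 1) = k - 1 by omega, hs]
    exact E.div_mem hUk (E.sub_mem (E.add_mem E.one_mem hV) hwk)

end StmtK

/-- `L(ŵ₀, ŵ₁, …, ŵ_{n−2}) = L(U₂, V₂, …, V_{n−1})` where
`L = ℚ(A₂)(U₃, …, U_{n−1})`, both sides being expressed as generation over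
`ℚ(A₂)` by the generators of `L` together with the respective families. -/
theorem stmt5 (n : ℕ) (hn : 3 ≤ n) :
    IntermediateField.adjoin StmtK.F
        ((fun k => StmtK.U n k) '' Set.Icc 3 (n - 1)
          ∪ Set.range (fun j : Fin (n - 1) => StmtK.wh n j))
      = IntermediateField.adjoin StmtK.F
        ((fun k => StmtK.U n k) '' Set.Icc 3 (n - 1)
          ∪ ({StmtK.U n 2} ∪ (fun k => StmtK.V n k) '' Set.Icc 2 (n - 1))) := by
  apply le_antisymm
  · rw [IntermediateField.adjoin_le_iff]
    set E := IntermediateField.adjoin StmtK.F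
        ((fun k => StmtK.U n k) '' Set.Icc 3 (n - 1)
          ∪ ({StmtK.U n 2} ∪ (fun k => StmtK.V n k) '' Set.Icc 2 (n - 1))) with hE
    have hU : ∀ k, 2 ≤ k → k ≤ n - 1 → StmtK.U n k ∈ E := by
      intro k h2 hk
      apply IntermediateField.subset_adjoin
      rcases h2.eq_or_lt with rfl | h3
      · exact Or.inr (Or.inl rfl)
      · exact Or.inl ⟨k, ⟨h3, hk⟩, rfl⟩
    have hV : ∀ k, 1 ≤ k → k ≤ n - 1 → StmtK.V n k ∈ E := by
      intro k h1 hk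
      rcases h1.eq_or_lt with rfl | h2
      · rw [StmtK.V_one]
        exact E.algebraMap_mem _
      · exact IntermediateField.subset_adjoin _ _ (Or.inr (Or.inr ⟨k, ⟨h2, hk⟩, rfl⟩))
    rintro x (⟨k, ⟨h3, hk⟩, rfl⟩ | ⟨⟨j, hj⟩, rfl⟩)
    · exact hU k (by omega) hk
    · rcases Nat.eq_zero_or_pos j with rfl | hpos
      · simp only [StmtK.wh_zero]
        exact hV _ (by omega) le_rfl
      · obtain ⟨k, hk, rfl⟩ : ∃ k, k < n ∧ j = n - k := ⟨n - j, by omega, by omega⟩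
        simp only [StmtK.wh_sub hk]
        exact E.sub_mem (E.add_mem E.one_mem (hV k (by omega) (by omega)))
          (E.div_mem (hU k (by omega) (by omega)) (hV (k - 1) (by omega) (by omega)))
  · rw [IntermediateField.adjoin_le_iff]
    set E := IntermediateField.adjoin StmtK.F
        ((fun k => StmtK.U n k) '' Set.Icc 3 (n - 1)
          ∪ Set.range (fun j : Fin (n - 1) => StmtK.wh n j)) with hE
    have hU : ∀ k, 3 ≤ k → k ≤ n - 1 → StmtK.U n k ∈ E := fun k h3 hk =>
      IntermediateField.subset_adjoin _ _ (Or.inl ⟨k, ⟨h3, hk⟩, rfl⟩)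
    have hw : ∀ j, j < n - 1 → StmtK.wh n j ∈ E := fun j hj =>
      IntermediateField.subset_adjoin _ _ (Or.inr ⟨⟨j, hj⟩, rfl⟩)
    have hV : ∀ k, 2 ≤ k → k ≤ n - 1 → StmtK.V n k ∈ E := by
      intro k h2 hk
      have h := StmtK.V_mem_s5 E hU hw (n - 1 - k) (by omega)
      rwa [Nat.sub_sub_self hk] at h
    rintro x (⟨k, ⟨h3, hk⟩, rfl⟩ | rfl | ⟨k, ⟨h2, hk⟩, rfl⟩)
    · exact hU k h3 hk
    · have hs : StmtK.U n 2 = (1 + StmtK.V n 2 - StmtK.wh n (n - 2)) * StmtK.V n 1 := by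
        rw [StmtK.wh_sub (by omega), sub_sub_cancel, div_mul_cancel₀ _ (StmtK.V_one_ne_zero n)]
      rw [hs, StmtK.V_one]
      exact E.mul_mem (E.sub_mem (E.add_mem E.one_mem (hV 2 le_rfl (by omega)))
        (hw _ (by omega))) (E.algebraMap_mem _)
    · exact hV k h2 hk
end
end

section
/- Let n ≥ 3 be an integer and let K = ℚ(A₂)(U₂, …, Uₙ, V₂, …, V_{n−1}) be the rational function field in the indeterminates U₂, …, Uₙ, V₂, …, V_{n−1} over ℚ(A₂). Set V₁ = (1 − 2A₂)/A₂, and define ŵ₀ = V_{n−1} and ŵ_{n−k} = 1 + V_k − U_k/V_{k−1} for 2 ≤ k ≤ n−1. Then the n−1 elements ŵ₀, ŵ₁, …, ŵ_{n−2} are algebraically independent over ℚ(A₂). -/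
/-!
The field `K` has transcendence degree `2n - 3` over `F = ℚ(A₂)`. Replace each indeterminate `U_k`
with `2 ≤ k ≤ n - 1` by `1 + V_k - U_k / V_{k-1}`, keeping `U_n` and all `V_k`. Since `V_{k-1} ≠ 0`,
the old indeterminate is recovered as `U_k = (1 + V_k - ŵ_{n-k}) V_{k-1}`, so the new family of
`2n - 3` elements still generates `K` as a field; hence it is a transcendence basis
(`algebraicIndependent_of_adjoin_eq_top`). The `ŵ_j` form a subfamily of it.
-/

/- STATEMENT 6: In K = ℚ(A₂)(U₂, …, Uₙ, V₂, …, V_{n−1}) (n ≥ 3), with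
V₁ = (1−2A₂)/A₂, ŵ₀ = V_{n−1} and ŵ_{n−k} = 1 + V_k − U_k/V_{k−1}
(2 ≤ k ≤ n−1), the n−1 elements ŵ₀, ŵ₁, …, ŵ_{n−2} are algebraically
independent over ℚ(A₂). -/

noncomputable section
open MvPolynomial Finset

/-- A generating family of a field extension that has the same finite index type as some
algebraically independent family is itself algebraically independent. -/
theorem algebraicIndependent_of_adjoin_eq_top {k L ι : Type*} [Field k] [Field L] [Algebra k L]
    [Finite ι] {x y : ι → L} (hx : AlgebraicIndependent k x)
    (hy : IntermediateField.adjoin k (Set.range y) = ⊤) : AlgebraicIndependent k y := by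
  have alg : Algebra.IsAlgebraic (Algebra.adjoin k (Set.range y)) L := by
    constructor
    intro a
    have ha : a ∈ IntermediateField.adjoin k (Set.range y) := hy ▸ IntermediateField.mem_top
    obtain ⟨r, hr, s, hs, rfl⟩ := IntermediateField.mem_adjoin_iff_div.mp ha
    rw [div_eq_mul_inv]
    exact (isAlgebraic_algebraMap (A := L) (⟨r, hr⟩ : Algebra.adjoin k (Set.range y))).mul
      (isAlgebraic_algebraMap (A := L) (⟨s, hs⟩ : Algebra.adjoin k (Set.range y))).inv
  exact (Algebra.IsAlgebraic.isTranscendenceBasis_of_lift_le_trdeg_of_finite k y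
    hx.lift_cardinalMk_le_trdeg).1

namespace StmtK

/-- The new generating family: `1 + V_k - U_k / V_{k-1}` in place of `U_k` for `2 ≤ k ≤ n - 1`,
while `U_n` and all `V_k` are kept. The entry at `Sum.inl i` belongs to `k = i + 2`, and the one at
`Sum.inr i` to `V_{i+2}`. -/
def newGen (n : ℕ) : σ n → K n
  | Sum.inl i => if (i : ℕ) + 2 = n then U n n else wh n (n - (i + 2))
  | Sum.inr i => V n (i + 2)

theorem V_ne_zero {n k : ℕ} (h1 : 1 ≤ k) (hk : k < n) : V n k ≠ 0 := by
  unfold V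
  split_ifs with h h'
  · rw [Ne, FaithfulSMul.algebraMap_eq_zero_iff, div_eq_zero_iff, not_or]
    refine ⟨fun h0 => ?_, RatFunc.X_ne_zero⟩
    -- `1 - 2 A₂` does not vanish at `A₂ = 0`.
    have h2 : (1 - 2 * Polynomial.X : Polynomial ℚ) = 0 := by
      apply RatFunc.algebraMap_injective ℚ
      simpa [RatFunc.algebraMap_X, map_ofNat] using h0
    simpa using congrArg (Polynomial.eval 0) h2
  · rw [Ne, FaithfulSMul.algebraMap_eq_zero_iff]
    exact X_ne_zero _
  · omega

theorem adjoin_newGen {n : ℕ} (hn : 3 ≤ n) :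
    IntermediateField.adjoin F (Set.range (newGen n)) = ⊤ := by
  set E := IntermediateField.adjoin F (Set.range (newGen n)) with hE
  have hmem (s) : newGen n s ∈ E := IntermediateField.subset_adjoin _ _ ⟨s, rfl⟩
  have hV (k : ℕ) (h1 : 1 ≤ k) (hk : k < n) : V n k ∈ E := by
    rcases eq_or_lt_of_le h1 with rfl | h1
    · simp only [V, if_true]
      exact E.algebraMap_mem _
    · have := hmem (Sum.inr ⟨k - 2, by omega⟩)
      simpa [newGen, Nat.sub_add_cancel h1] using this
  have hU (k : ℕ) (h1 : 2 ≤ k) (hk : k ≤ n) : U n k ∈ E := by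
    have h := hmem (Sum.inl ⟨k - 2, by omega⟩)
    rcases eq_or_lt_of_le hk with rfl | hk
    · simpa [newGen, Nat.sub_add_cancel h1] using h
    · simp only [newGen, Nat.sub_add_cancel h1, hk.ne, if_false, wh,
        Nat.sub_sub_self hk.le, (Nat.sub_pos_of_lt hk).ne'] at h
      have h0 := V_ne_zero (n := n) (k := k - 1) (by omega) (by omega)
      have hUeq : U n k = (1 + V n k - (1 + V n k - U n k / V n (k - 1))) * V n (k - 1) := by
        field_simp
        ring
      rw [hUeq]
      exact E.mul_mem (E.sub_mem (E.add_mem E.one_mem (hV k (by omega) hk)) h)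
        (hV (k - 1) (by omega) (by omega))
  have hX (s : σ n) : algebraMap (MvPolynomial (σ n) F) (K n) (X s) ∈ E := by
    rcases s with ⟨i, hi⟩ | ⟨i, hi⟩
    · simpa [U, hi] using hU (i + 2) (by omega) (by omega)
    · simpa [V, hi] using hV (i + 2) (by omega) (by omega)
  have hpoly (p : MvPolynomial (σ n) F) : algebraMap (MvPolynomial (σ n) F) (K n) p ∈ E := by
    induction p using MvPolynomial.induction_on with
    | C a => exact E.algebraMap_mem a
    | add p q hp hq => rw [map_add]; exact E.add_mem hp hq
    | mul_X p s hp => rw [map_mul]; exact E.mul_mem hp (hX s)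
  rw [eq_top_iff]
  intro a _
  obtain ⟨p, q, -, rfl⟩ := IsFractionRing.div_surjective (A := MvPolynomial (σ n) F) a
  exact E.div_mem (hpoly p) (hpoly q)

/-- The position of `ŵ_j` in the family `newGen n`; note `ŵ₀ = V_{n-1}`. -/
def position {n : ℕ} (hn : 3 ≤ n) (j : Fin (n - 1)) : σ n :=
  if (j : ℕ) = 0 then Sum.inr ⟨n - 3, by omega⟩ else Sum.inl ⟨n - 2 - j, by omega⟩

theorem position_injective {n : ℕ} (hn : 3 ≤ n) : Function.Injective (position hn) := by
  intro i j hij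
  have hi := i.2
  have hj := j.2
  unfold position at hij
  apply Fin.ext
  split_ifs at hij
  · omega
  · simp only [Sum.inl.injEq, Fin.mk.injEq] at hij
    omega

theorem newGen_position {n : ℕ} (hn : 3 ≤ n) (j : Fin (n - 1)) :
    newGen n (position hn j) = wh n j := by
  have hj := j.2
  by_cases h : (j : ℕ) = 0
  · simp only [position, h, if_true, newGen, wh]
    congr 1
    omega
  · have h1 : n - 2 - (j : ℕ) + 2 ≠ n := by omega
    have h2 : n - (n - 2 - (j : ℕ) + 2) = j := by omega
    simp only [position, h, if_false, newGen, h1, h2]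

end StmtK

/-- The n−1 elements `ŵ₀, ŵ₁, …, ŵ_{n−2}` are algebraically independent over
`ℚ(A₂)`. -/
theorem stmt6 (n : ℕ) (hn : 3 ≤ n) :
    AlgebraicIndependent StmtK.F (fun j : Fin (n - 1) => StmtK.wh n j) := by
  have hX : AlgebraicIndependent StmtK.F
      (fun s => algebraMap (MvPolynomial (StmtK.σ n) StmtK.F) (StmtK.K n) (X s)) :=
    (MvPolynomial.algebraicIndependent_X (StmtK.σ n) StmtK.F).map'
      (f := IsScalarTower.toAlgHom StmtK.F _ (StmtK.K n))
      (IsFractionRing.injective (MvPolynomial (StmtK.σ n) StmtK.F) (StmtK.K n))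
  have hnew := algebraicIndependent_of_adjoin_eq_top hX (StmtK.adjoin_newGen hn)
  have := hnew.comp _ (StmtK.position_injective hn)
  simpa only [Function.comp_def, StmtK.newGen_position] using this
end
end

section
/- Let n ≥ 3 be an integer and let K = ℚ(A₂)(U₂, …, Uₙ, V₂, …, V_{n−1}) be the rational function field over ℚ(A₂). Set V₁ = (1 − 2A₂)/A₂, ŵ₀ = V_{n−1}, ŵ_{n−k} = 1 + V_k − U_k/V_{k−1} for 2 ≤ k ≤ n−1, and w_{n−k} = U_k for 2 ≤ k ≤ n. In the polynomial ring ℚ(A₂)[Ŷ₀, …, Ŷ_{n−2}, Y₀, …, Y_{n−2}], define E_k, F_k by the recurrences E_{−1} = 1, F_{−1} = 0, E₀ = f₀, F₀ = 1, E_k = f_k·E_{k−1} + e_k·E_{k−2}, F_k = f_k·F_{k−1} + e_k·F_{k−2} (1 ≤ k ≤ n−2), where e_k = Y_k, f_k = Ŷ_{k+1} − 1 for 0 ≤ k ≤ n−3 and f_{n−2} = (1 − 2A₂)/A₂. If R ∈ ℚ(A₂)[Ŷ₀, …, Ŷ_{n−2}, Y₀, …, Y_{n−2}] is an irreducible polynomial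 with R(ŵ₀, …, ŵ_{n−2}, w₀, …, w_{n−2}) = 0 in K, then there exists α ∈ ℚ(A₂) with R = α·(F_{n−2}·Ŷ₀ − E_{n−2}). -/
/-!
Write `G = F_{n−2}·Ŷ₀ − E_{n−2}` and let `φ` be the evaluation at `(ŵ, w)`.

* `G` lies in the kernel of `φ`: the `V_k` satisfy
  `V_{n−1−k} = f_k + e_{k+1}/V_{n−2−k}`, so `ŵ₀ = V_{n−1}` is the value of the continued fraction
  whose last convergent is `E_{n−2}/F_{n−2}` (`convF_mul_eq_convE`).
* `φ` is injective on the polynomials without `Ŷ₀`: solving the same relations for the `V_k` shows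
  that the `2n−3` elements `ŵ₁, …, ŵ_{n−2}, w₀, …, w_{n−2}` generate `K`, whose transcendence degree
  is `2n−3`; hence they are algebraically independent (`algebraicIndependent_generators`).
* `G` is irreducible: it is linear in `Ŷ₀`, and its coefficients are coprime, because the
  determinant formula shows that a common divisor of `E_{n−2}` and `F_{n−2}` divides
  `Y₁⋯Y_{n−2}`, while `F_{n−2}` is nonzero modulo the `Y_k` (`isRelPrime_convF_convE`).

Pseudo-division of `P` by `G` in the variable `Ŷ₀` gives `F_{n−2}^d · P ≡ r` modulo `G` with `r`
free of `Ŷ₀`. If `φ P = 0` then `φ r = 0`, so `r = 0` and `G ∣ F_{n−2}^d · P`. As `G` is prime and does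
not divide `F_{n−2}`, it divides `P`, and irreducibility of `P` makes the quotient a constant.
-/

/- STATEMENT 11: With K = ℚ(A₂)(U₂, …, Uₙ, V₂, …, V_{n−1}) (n ≥ 3) and the
C = 1 specializations ŵ, w, and in ℚ(A₂)[Ŷ₀, …, Ŷ_{n−2}, Y₀, …, Y_{n−2}] the
convergent polynomials E_k, F_k with e_k = Y_k, f_k = Ŷ_{k+1} − 1 (0 ≤ k ≤ n−3),
f_{n−2} = (1−2A₂)/A₂: every irreducible polynomial R vanishing at
(ŵ₀, …, ŵ_{n−2}, w₀, …, w_{n−2}) is of the form α·(F_{n−2}·Ŷ₀ − E_{n−2})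
with α ∈ ℚ(A₂). -/

noncomputable section
open MvPolynomial Finset

/-- Numerators `E` of the convergents of the finite generalized continued
fraction `f₀ + K (e_k/f_k)`, with index shifted by one: `convE f e (k+1) = E_k`,
`convE f e 0 = E₋₁ = 1`. -/
def convE {R : Type*} [CommRing R] (f e : ℕ → R) : ℕ → R
  | 0 => 1
  | 1 => f 0
  | (k + 2) => f (k + 1) * convE f e (k + 1) + e (k + 1) * convE f e k

/-- Denominators `F` of the convergents of the finite generalized continued
fraction `f₀ + K (e_k/f_k)`, with index shifted by one: `convF f e (k+1) = F_k`,
`convF f e 0 = F₋₁ = 0`. -/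
def convF {R : Type*} [CommRing R] (f e : ℕ → R) : ℕ → R
  | 0 => 0
  | 1 => 1
  | (k + 2) => f (k + 1) * convF f e (k + 1) + e (k + 1) * convF f e k

namespace Stmt11

/-- The polynomial ring `ℚ(A₂)[Ŷ₀, …, Ŷ_{n−2}, Y₀, …, Y_{n−2}]`. -/
abbrev R (n : ℕ) := MvPolynomial (Fin (n - 1) ⊕ Fin (n - 1)) StmtK.F

variable (n : ℕ)

/-- The indeterminate `Ŷ_k` for `0 ≤ k ≤ n−2` (junk value 0 outside this range). -/
def Yh (k : ℕ) : R n := if h : k < n - 1 then X (Sum.inl ⟨k, h⟩) else 0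

/-- The indeterminate `Y_k` for `0 ≤ k ≤ n−2` (junk value 0 outside this range). -/
def Y (k : ℕ) : R n := if h : k < n - 1 then X (Sum.inr ⟨k, h⟩) else 0

/-- `e_k = Y_k`. -/
def e : ℕ → R n := fun k => Y n k

/-- `f_k = Ŷ_{k+1} − 1` for `0 ≤ k ≤ n−3`, and `f_{n−2} = (1−2A₂)/A₂ ∈ ℚ(A₂)`. -/
def f : ℕ → R n := fun k =>
  if k = n - 2 then C ((1 - 2 * RatFunc.X) / RatFunc.X) else Yh n (k + 1) - 1

end Stmt11

/-! ### Convergents of continued fractions -/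

lemma map_convE {A B : Type*} [CommRing A] [CommRing B] (g : A →+* B) (f e : ℕ → A) :
    ∀ k, g (convE f e k) = convE (fun i => g (f i)) (fun i => g (e i)) k
  | 0 => by simp [convE]
  | 1 => by simp [convE]
  | k + 2 => by simp [convE, map_convE g f e (k + 1), map_convE g f e k]

lemma map_convF {A B : Type*} [CommRing A] [CommRing B] (g : A →+* B) (f e : ℕ → A) :
    ∀ k, g (convF f e k) = convF (fun i => g (f i)) (fun i => g (e i)) k
  | 0 => by simp [convF]
  | 1 => by simp [convF]
  | k + 2 => by simp [convF, map_convF g f e (k + 1), map_convF g f e k]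

/-- If `v k` is the `k`-th tail of the continued fraction, then `v 0` is expressed through the
convergents and the tail `v (k + 1)` by the usual Möbius transformation. -/
lemma conv_tail {A : Type*} [CommRing A] (f e v : ℕ → A) (k : ℕ)
    (hv : ∀ i ≤ k, v i * v (i + 1) = f i * v (i + 1) + e (i + 1)) :
    v 0 * (v (k + 1) * convF f e (k + 1) + e (k + 1) * convF f e k) =
      v (k + 1) * convE f e (k + 1) + e (k + 1) * convE f e k := by
  induction k with
  | zero => simp only [convE, convF]; linear_combination hv 0 le_rfl
  | succ k ih =>
    have ih' := ih fun i hi => hv i (by omega)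
    have h := hv (k + 1) le_rfl
    simp only [convE, convF]
    linear_combination v (k + 2) * ih' +
      (convE f e (k + 1) - v 0 * convF f e (k + 1)) * h

/-- A finite continued fraction is the quotient of its last convergents. -/
lemma convF_mul_eq_convE {A : Type*} [CommRing A] (f e v : ℕ → A) (m : ℕ)
    (hv : ∀ i < m + 1, v i * v (i + 1) = f i * v (i + 1) + e (i + 1))
    (hm : v (m + 1) = f (m + 1)) :
    convF f e (m + 2) * v 0 = convE f e (m + 2) := by
  have h := conv_tail f e v m fun i hi => hv i (by omega)
  simp only [convE, convF, ← hm]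
  linear_combination h

/-- The determinant formula for consecutive convergents. -/
lemma conv_det {A : Type*} [CommRing A] (f e : ℕ → A) (k : ℕ) :
    convE f e (k + 1) * convF f e k - convE f e k * convF f e (k + 1) =
      (-1) ^ (k + 1) * ∏ i ∈ range k, e (i + 1) := by
  induction k with
  | zero => simp [convE, convF]
  | succ k ih =>
    rw [prod_range_succ, pow_succ]
    simp only [convE, convF]
    linear_combination (-e (k + 1)) * ih

lemma convF_of_e_eq_zero {A : Type*} [CommRing A] (f e : ℕ → A) (he : ∀ i, e i = 0) (k : ℕ) :
    convF f e (k + 1) = ∏ i ∈ range k, f (i + 1) := by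
  induction k with
  | zero => simp [convF]
  | succ k ih => rw [prod_range_succ, ← ih]; simp [convF, he, mul_comm]

lemma convE_mem {A B : Type*} [CommRing A] [CommRing B] [Algebra A B] (S : Subalgebra A B)
    (f e : ℕ → B) (hf : ∀ i, f i ∈ S) (he : ∀ i, e i ∈ S) : ∀ k, convE f e k ∈ S
  | 0 => S.one_mem
  | 1 => hf 0
  | k + 2 => S.add_mem (S.mul_mem (hf _) (convE_mem S f e hf he (k + 1)))
      (S.mul_mem (he _) (convE_mem S f e hf he k))

lemma convF_mem {A B : Type*} [CommRing A] [CommRing B] [Algebra A B] (S : Subalgebra A B)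
    (f e : ℕ → B) (hf : ∀ i, f i ∈ S) (he : ∀ i, e i ∈ S) : ∀ k, convF f e k ∈ S
  | 0 => S.zero_mem
  | 1 => S.one_mem
  | k + 2 => S.add_mem (S.mul_mem (hf _) (convF_mem S f e hf he (k + 1)))
      (S.mul_mem (he _) (convF_mem S f e hf he k))

/-! ### Pseudo-division by a polynomial linear in one variable -/

/-- Modulo `a * X i - b`, multiplying by a power of `a` eliminates the variable `X i`. -/
lemma exists_pseudo_rem {ι k : Type*} [Field k] (i : ι) (a b : MvPolynomial ι k)
    (ha : a ∈ supported k {j | j ≠ i}) (hb : b ∈ supported k {j | j ≠ i})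
    (p : MvPolynomial ι k) :
    ∃ d : ℕ, ∃ r ∈ supported k {j | j ≠ i}, a * X i - b ∣ a ^ d * p - r := by
  induction p using MvPolynomial.induction_on with
  | C c => exact ⟨0, C c, (supported k _).algebraMap_mem c, by simp⟩
  | add p q hp hq =>
    obtain ⟨d, r, hr, u, hu⟩ := hp
    obtain ⟨d', r', hr', u', hu'⟩ := hq
    refine ⟨d + d', a ^ d' * r + a ^ d * r', ?_, a ^ d' * u + a ^ d * u', ?_⟩
    · exact add_mem (mul_mem (pow_mem ha _) hr) (mul_mem (pow_mem ha _) hr')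
    · linear_combination a ^ d' * hu + a ^ d * hu'
  | mul_X p j hp =>
    obtain ⟨d, r, hr, u, hu⟩ := hp
    by_cases hj : j = i
    · subst hj
      exact ⟨d + 1, r * b, mul_mem hr hb, a * X j * u + r, by linear_combination a * X j * hu⟩
    · exact ⟨d, r * X j, mul_mem hr (X_mem_supported.2 hj), u * X j,
        by linear_combination X j * hu⟩

namespace Stmt11

/-! ### The point `(ŵ, w)` -/

/-- The constant `V₁ = f_{n−2} = (1 − 2A₂)/A₂`. -/
def c : StmtK.F := (1 - 2 * RatFunc.X) / RatFunc.X

lemma c_ne_zero : c ≠ 0 := by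
  refine div_ne_zero (fun h => ?_) RatFunc.X_ne_zero
  have h2 : algebraMap (Polynomial ℚ) (RatFunc ℚ) (1 - 2 * Polynomial.X) = 0 := by
    rw [map_sub, map_mul, map_one, map_ofNat, RatFunc.algebraMap_X]
    exact h
  rw [FaithfulSMul.algebraMap_eq_zero_iff] at h2
  simpa using congrArg (Polynomial.eval 0) h2

/-- The point `(ŵ₀, …, ŵ_{n−2}, w₀, …, w_{n−2})`. -/
def pt (n : ℕ) : Fin (n - 1) ⊕ Fin (n - 1) → StmtK.K n :=
  Sum.elim (fun j : Fin (n - 1) => StmtK.wh n j) (fun j : Fin (n - 1) => StmtK.w n j)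

lemma V_ne_zero (n k : ℕ) (h1 : 1 ≤ k) (hk : k ≤ n - 1) : StmtK.V n k ≠ 0 := by
  unfold StmtK.V
  split_ifs with h h'
  · exact (map_ne_zero _).2 c_ne_zero
  · rw [Ne, FaithfulSMul.algebraMap_eq_zero_iff]
    exact X_ne_zero _
  · omega

lemma wh_succ (n k : ℕ) : StmtK.wh n (k + 1) =
    1 + StmtK.V n (n - 1 - k) - StmtK.U n (n - 1 - k) / StmtK.V n (n - 1 - (k + 1)) := by
  simp only [StmtK.wh, Nat.succ_ne_zero, if_false, show n - (k + 1) = n - 1 - k by omega,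
    show n - 1 - k - 1 = n - 1 - (k + 1) by omega]

/-- The relation `V_{n−1−k} = f_k + e_{k+1}/V_{n−2−k}`, denominators cleared. -/
lemma V_rec (n k : ℕ) (hk : k + 2 < n) :
    StmtK.V n (n - 1 - k) * StmtK.V n (n - 1 - (k + 1)) =
      (StmtK.wh n (k + 1) - 1) * StmtK.V n (n - 1 - (k + 1)) + StmtK.w n (k + 1) := by
  have h := V_ne_zero n (n - 1 - (k + 1)) (by omega) (by omega)
  rw [wh_succ, StmtK.w, show n - (k + 1) = n - 1 - k by omega]
  field_simp
  ring

lemma aeval_Yh (n k : ℕ) (hk : k < n - 1) : aeval (pt n) (Yh n k) = StmtK.wh n k := by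
  simp [Yh, hk, pt]

lemma aeval_Y (n k : ℕ) (hk : k < n - 1) : aeval (pt n) (Y n k) = StmtK.w n k := by
  simp [Y, hk, pt]

/-- The convergent relation `F_{n−2}·ŵ₀ = E_{n−2}` at the point `(ŵ, w)`. -/
lemma aeval_G (m : ℕ) :
    aeval (pt (m + 3)) (convF (f (m + 3)) (e (m + 3)) (m + 2) * Yh (m + 3) 0 -
      convE (f (m + 3)) (e (m + 3)) (m + 2)) = 0 := by
  have hE := map_convE (aeval (pt (m + 3))).toRingHom (f (m + 3)) (e (m + 3)) (m + 2)
  have hF := map_convF (aeval (pt (m + 3))).toRingHom (f (m + 3)) (e (m + 3)) (m + 2)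
  simp only [AlgHom.toRingHom_eq_coe, RingHom.coe_coe] at hE hF
  rw [map_sub, map_mul, hE, hF, aeval_Yh _ _ (by omega), sub_eq_zero]
  have := convF_mul_eq_convE (fun i => aeval (pt (m + 3)) (f (m + 3) i))
    (fun i => aeval (pt (m + 3)) (e (m + 3) i)) (fun k => StmtK.V (m + 3) (m + 3 - 1 - k)) m ?_ ?_
  · simpa [StmtK.wh] using this
  · intro i hi
    simp only [e, f]
    rw [if_neg (by omega), aeval_Y _ _ (by omega), map_sub, aeval_Yh _ _ (by omega), map_one]
    exact V_rec (m + 3) i (by omega)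
  · simp [f, StmtK.V]

/-! ### Algebraic independence of `ŵ₁, …, ŵ_{n−2}, w₀, …, w_{n−2}` -/

/-- A subfield of `K` containing `ŵ₁, …, ŵ_{n−2}` and `w₀, …, w_{n−2}` is all of `K`. -/
lemma eq_top_of_mem (m : ℕ) (L : IntermediateField StmtK.F (StmtK.K (m + 3)))
    (hwh : ∀ k, k < m + 1 → StmtK.wh (m + 3) (k + 1) ∈ L)
    (hw : ∀ k, k < m + 2 → StmtK.w (m + 3) k ∈ L) : L = ⊤ := by
  have hU : ∀ k, 2 ≤ k → k ≤ m + 3 → StmtK.U (m + 3) k ∈ L := by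
    intro k h2 hk
    have := hw (m + 3 - k) (by omega)
    rwa [StmtK.w, show m + 3 - (m + 3 - k) = k by omega] at this
  have hV : ∀ k, k ≤ m + 1 → StmtK.V (m + 3) (k + 1) ∈ L := by
    intro k
    induction k with
    | zero => intro _; rw [StmtK.V, if_pos rfl]; exact L.algebraMap_mem _
    | succ k ih =>
      intro hk
      have h := hwh (m - k) (by omega)
      rw [wh_succ, show m + 3 - 1 - (m - k) = k + 1 + 1 by omega,
        show m + 3 - 1 - (m - k + 1) = k + 1 by omega] at h
      have h' := L.div_mem (hU (k + 1 + 1) (by omega) (by omega)) (ih (by omega))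
      have := L.sub_mem (L.add_mem h h') L.one_mem
      convert this using 1
      ring
  have hpoly : ∀ p : MvPolynomial (StmtK.σ (m + 3)) StmtK.F,
      algebraMap _ (StmtK.K (m + 3)) p ∈ L := by
    intro p
    induction p using MvPolynomial.induction_on with
    | C a =>
      rw [← MvPolynomial.algebraMap_eq, ← IsScalarTower.algebraMap_apply]
      exact L.algebraMap_mem a
    | add p q hp hq => rw [map_add]; exact L.add_mem hp hq
    | mul_X p i hp =>
      rw [map_mul]
      refine L.mul_mem hp ?_
      rcases i with ⟨i, hi⟩ | ⟨i, hi⟩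
      · have := hU (i + 2) (by omega) (by omega)
        rwa [StmtK.U, dif_pos (by simpa using hi)] at this
      · have := hV (i + 1) (by omega)
        rwa [StmtK.V, if_neg (by omega), dif_pos (by simpa using hi)] at this
  refine eq_top_iff.2 fun x _ => ?_
  obtain ⟨a, b, _, rfl⟩ :=
    IsFractionRing.div_surjective (A := MvPolynomial (StmtK.σ (m + 3)) StmtK.F) x
  exact L.div_mem (hpoly a) (hpoly b)

/-- The elements `ŵ₁, …, ŵ_{n−2}, w₀, …, w_{n−2}` generate `K` and their number is the
transcendence degree of `K`, so they are algebraically independent. -/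
lemma algebraicIndependent_generators (m : ℕ) :
    AlgebraicIndependent StmtK.F
      (pt (m + 3) ∘ (↑) :
        {j : Fin (m + 3 - 1) ⊕ Fin (m + 3 - 1) | j ≠ Sum.inl ⟨0, by omega⟩} → StmtK.K (m + 3)) := by
  set x := (pt (m + 3) ∘ (↑) :
    {j : Fin (m + 3 - 1) ⊕ Fin (m + 3 - 1) | j ≠ Sum.inl ⟨0, by omega⟩} → StmtK.K (m + 3)) with hx
  have htop : IntermediateField.adjoin StmtK.F (Set.range x) = ⊤ := by
    apply eq_top_of_mem
    · intro k hk
      refine IntermediateField.subset_adjoin _ _ ⟨⟨Sum.inl ⟨k + 1, by omega⟩, by simp⟩, ?_⟩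
      simp [hx, pt]
    · intro k hk
      refine IntermediateField.subset_adjoin _ _ ⟨⟨Sum.inr ⟨k, by omega⟩, by simp⟩, ?_⟩
      simp [hx, pt]
  have halg : Algebra.IsAlgebraic (Algebra.adjoin StmtK.F (Set.range x)) (StmtK.K (m + 3)) := by
    rw [← IntermediateField.isAlgebraic_adjoin_iff_top, htop]
    exact ⟨fun y => isAlgebraic_algebraMap
      (⟨y, IntermediateField.mem_top⟩ : (⊤ : IntermediateField StmtK.F (StmtK.K (m + 3))))⟩
  have hind : AlgebraicIndependent StmtK.F
      (fun i : StmtK.σ (m + 3) => algebraMap (MvPolynomial (StmtK.σ (m + 3)) StmtK.F)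
        (StmtK.K (m + 3)) (X i)) :=
    (MvPolynomial.algebraicIndependent_X (StmtK.σ (m + 3)) StmtK.F).map'
      (f := IsScalarTower.toAlgHom StmtK.F _ (StmtK.K (m + 3)))
      (IsFractionRing.injective _ (StmtK.K (m + 3)))
  refine (Algebra.IsAlgebraic.isTranscendenceBasis_of_le_trdeg_of_finite StmtK.F x
    (le_trans ?_ hind.cardinalMk_le_trdeg)).1
  rw [Cardinal.mk_fintype, Cardinal.mk_fintype, Nat.cast_le]
  simp only [Set.coe_ofPred, ne_eq, Fintype.card_subtype_compl, Fintype.card_sum, Fintype.card_fin,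
    Fintype.card_unique]
  omega

/-! ### Irreducibility of `F_{n−2}·Ŷ₀ − E_{n−2}` -/

lemma f_mem (m i : ℕ) : f (m + 3) i ∈
    supported StmtK.F
      {j : Fin (m + 3 - 1) ⊕ Fin (m + 3 - 1) | j ≠ Sum.inl ⟨0, by omega⟩} := by
  unfold f Yh
  split_ifs with h1 h2
  · exact Subalgebra.algebraMap_mem _ _
  · exact sub_mem (X_mem_supported.2 (by simp)) (one_mem _)
  · exact sub_mem (zero_mem _) (one_mem _)

lemma e_mem (m i : ℕ) : e (m + 3) i ∈
    supported StmtK.F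
      {j : Fin (m + 3 - 1) ⊕ Fin (m + 3 - 1) | j ≠ Sum.inl ⟨0, by omega⟩} := by
  unfold e Y
  split_ifs with h
  · exact X_mem_supported.2 (by simp)
  · exact zero_mem _

/-- At `Ŷ = 2`, `Y = 0` every `f_k` with `k ≤ n−2` is nonzero, hence so is `F_{n−2} = f₁⋯f_{n−2}`. -/
lemma eval_convF_ne_zero (m : ℕ) :
    aeval (Sum.elim (fun _ => 2) (fun _ => 0) : Fin (m + 3 - 1) ⊕ Fin (m + 3 - 1) → StmtK.F)
      (convF (f (m + 3)) (e (m + 3)) (m + 2)) ≠ 0 := by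
  set g := aeval (R := StmtK.F)
    (Sum.elim (fun _ => 2) (fun _ => 0) : Fin (m + 3 - 1) ⊕ Fin (m + 3 - 1) → StmtK.F) with hg
  have hF := map_convF g.toRingHom (f (m + 3)) (e (m + 3)) (m + 2)
  simp only [AlgHom.toRingHom_eq_coe, RingHom.coe_coe] at hF
  rw [hF, convF_of_e_eq_zero, prod_ne_zero_iff]
  · intro i hi
    rw [mem_range] at hi
    unfold f Yh
    split_ifs with h1 h2
    · rw [hg, aeval_C]
      exact c_ne_zero
    · simp only [hg, map_sub, aeval_X, Sum.elim_inl, map_one]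
      norm_num
    · omega
  · intro i
    unfold e Y
    split_ifs <;> simp [hg]

lemma isRelPrime_convF_convE (m : ℕ) :
    IsRelPrime (convF (f (m + 3)) (e (m + 3)) (m + 2)) (convE (f (m + 3)) (e (m + 3)) (m + 2)) := by
  have hprod : IsRelPrime (convF (f (m + 3)) (e (m + 3)) (m + 2))
      (∏ i ∈ range (m + 1), e (m + 3) (i + 1)) := by
    refine IsRelPrime.prod_right fun i hi => IsRelPrime.symm ?_
    rw [mem_range] at hi
    have he : e (m + 3) (i + 1) = X (Sum.inr ⟨i + 1, by omega⟩) := by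
      rw [e, Y, dif_pos]
    rw [he, (X_prime (R := StmtK.F)).irreducible.isRelPrime_iff_not_dvd]
    rintro ⟨q, hq⟩
    apply eval_convF_ne_zero m
    rw [hq]
    simp
  intro d hdF hdE
  refine hprod hdF ?_
  have hdet := conv_det (f (m + 3)) (e (m + 3)) (m + 1)
  have hd : d ∣ (-1) ^ (m + 1 + 1) * ∏ i ∈ range (m + 1), e (m + 3) (i + 1) := by
    rw [← hdet]
    exact dvd_sub (hdE.mul_right _) (hdF.mul_left _)
  exact (IsUnit.dvd_mul_left ((isUnit_one.neg).pow _)).1 hd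

end Stmt11

/-- If an irreducible polynomial `P ∈ ℚ(A₂)[Ŷ₀, …, Ŷ_{n−2}, Y₀, …, Y_{n−2}]`
vanishes at `(ŵ₀, …, ŵ_{n−2}, w₀, …, w_{n−2})`, then `P = α·(F_{n−2}·Ŷ₀ − E_{n−2})`
for some `α ∈ ℚ(A₂)`.  (Here `convE/convF` are index-shifted:
`E_{n−2} = convE _ _ (n−1)`.) -/
theorem stmt11 (n : ℕ) (hn : 3 ≤ n) (P : Stmt11.R n) (hirr : Irreducible P)
    (hvan : MvPolynomial.aeval
        (Sum.elim (fun j : Fin (n - 1) => StmtK.wh n j)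
          (fun j : Fin (n - 1) => StmtK.w n j)) P = 0) :
    ∃ α : StmtK.F, P = MvPolynomial.C α *
      (convF (Stmt11.f n) (Stmt11.e n) (n - 1) * Stmt11.Yh n 0 -
        convE (Stmt11.f n) (Stmt11.e n) (n - 1)) := by
  obtain ⟨m, rfl⟩ : ∃ m, n = m + 3 := ⟨n - 3, by omega⟩
  change aeval (Stmt11.pt (m + 3)) P = 0 at hvan
  simp only [show m + 3 - 1 = m + 2 from rfl]
  set S := supported StmtK.F
    {j : Fin (m + 3 - 1) ⊕ Fin (m + 3 - 1) | j ≠ Sum.inl ⟨0, by omega⟩} with hS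
  have haS : convF (Stmt11.f (m + 3)) (Stmt11.e (m + 3)) (m + 2) ∈ S :=
    convF_mem S _ _ (Stmt11.f_mem m) (Stmt11.e_mem m) _
  have hbS : convE (Stmt11.f (m + 3)) (Stmt11.e (m + 3)) (m + 2) ∈ S :=
    convE_mem S _ _ (Stmt11.f_mem m) (Stmt11.e_mem m) _
  have hG0 := Stmt11.aeval_G m
  have hrel := Stmt11.isRelPrime_convF_convE m
  have ha0 : convF (Stmt11.f (m + 3)) (Stmt11.e (m + 3)) (m + 2) ≠ 0 := fun h =>
    Stmt11.eval_convF_ne_zero m (by rw [h, map_zero])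
  have hinj : ∀ p ∈ S, aeval (Stmt11.pt (m + 3)) p = 0 → p = 0 :=
    algebraicIndependent_comp_subtype.1 (Stmt11.algebraicIndependent_generators m)
  have hY : Stmt11.Yh (m + 3) 0 = X (Sum.inl ⟨0, by omega⟩) := by
    rw [Stmt11.Yh, dif_pos]
  rw [hY] at hG0 ⊢
  generalize convF (Stmt11.f (m + 3)) (Stmt11.e (m + 3)) (m + 2) = a at *
  generalize convE (Stmt11.f (m + 3)) (Stmt11.e (m + 3)) (m + 2) = b at *
  have hnv : ∀ p ∈ S, (Sum.inl ⟨0, by omega⟩ : Fin (m + 3 - 1) ⊕ Fin (m + 3 - 1)) ∉ p.vars :=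
    fun p hp h => mem_supported.1 hp h rfl
  have hGirr : Irreducible (a * X (Sum.inl ⟨0, by omega⟩) - b) := by
    rw [sub_eq_add_neg]
    exact irreducible_mul_X_add a (-b) _ ha0 (hnv a haS) (hnv _ (neg_mem hbS)) hrel.neg_right
  obtain ⟨d, r, hr, hdvd⟩ := exists_pseudo_rem _ a b haS hbS P
  have hr0 : r = 0 := by
    refine hinj r hr ?_
    obtain ⟨u, hu⟩ := hdvd
    have := congrArg (aeval (Stmt11.pt (m + 3))) hu
    rw [map_mul, hG0, zero_mul, map_sub, map_mul, hvan, mul_zero, zero_sub, neg_eq_zero] at this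
    exact this
  rw [hr0, sub_zero] at hdvd
  have hGP : a * X (Sum.inl ⟨0, by omega⟩) - b ∣ P := by
    refine (hGirr.prime.dvd_or_dvd hdvd).resolve_left fun h => ?_
    -- `φ` kills `G` but not `a`, so `G` cannot divide a power of `a`.
    obtain ⟨u, hu⟩ := hGirr.prime.dvd_of_dvd_pow h
    refine ha0 (hinj a haS ?_)
    rw [hu, map_mul, hG0, zero_mul]
  obtain ⟨q, hq⟩ := hGP
  have hqu := (hirr.isUnit_or_isUnit hq).resolve_left hGirr.not_isUnit
  obtain ⟨α, -, rfl⟩ := isUnit_iff_eq_C_of_isReduced.1 hqu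
  exact ⟨α, by rw [hq, mul_comm]⟩
end
end

section
/- Let n ≥ 3 be an integer. In the rational function field ℚ(C, A₂, A₃, …, Aₙ, D, B₂, …, Bₙ) in 2n indeterminates over ℚ, define the 2n elements Ŵ_{n−1} = 1/A₂ − 1; Ŵ₀ = (1 − (2A₂ + A₃ + ⋯ + Aₙ))/(A₂ + B₂ + ⋯ + B_{n−1}); Ŵ_{n−k} = (1 − (2A₂ + A₃ + ⋯ + A_{k+1}) + B_k)/(A₂ + B₂ + ⋯ + B_k) for 2 ≤ k ≤ n−1; W_{n−k} = C·(1 − (2A₂ + A₃ + ⋯ + A_k))/(A₂ + B₂ + ⋯ + B_k) for 2 ≤ k ≤ n; and W_{n−1} = (D + C·(1 − 2A₂))/A₂. If the 2n−2 elements Ŵ₀, …, Ŵ_{n−2}, W₀, …, W_{n−2} are algebraically independent over the subfield ℚ(A₂), then all 2n elements W₀, …, W_{n−1}, Ŵ₀, …, Ŵ_{n−1} are algebraically independent over ℚ. -/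
/-!
The independence is built up one layer at a time. The indeterminate `A₂` is transcendental over `ℚ`,
hence so is `Ŵ_{n-1} = 1/A₂ - 1`; since `Ŵ_{n-1}` lies in `ℚ(A₂)`, over which the `2n - 2` elements
`Ŵ₀, …, Ŵ_{n-2}, W₀, …, W_{n-2}` are independent by hypothesis, these together with `Ŵ_{n-1}` are
independent over `ℚ`. All of them lie in the subfield `noD n` generated by the indeterminates other
than `D`, and `D` is transcendental over it. As `D = W_{n-1} A₂ - C (1 - 2A₂)`, the element
`W_{n-1}` is transcendental over `noD n` as well, and it can be adjoined to the family.
-/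


/- STATEMENT 14: In ℚ(C, A₂, …, Aₙ, D, B₂, …, Bₙ) (n ≥ 3), with the 2n elements
W₀, …, W_{n−1}, Ŵ₀, …, Ŵ_{n−1} defined by the formulas of the paper: if
Ŵ₀, …, Ŵ_{n−2}, W₀, …, W_{n−2} are algebraically independent over the subfield
ℚ(A₂), then all 2n elements are algebraically independent over ℚ. -/

noncomputable section
open MvPolynomial Finset

/-- Index type for the 2n indeterminates `C`, `D`, `A₂, …, Aₙ`, `B₂, …, Bₙ`. -/
abbrev Stmt14.σ (n : ℕ) := (Unit ⊕ Unit) ⊕ (Fin (n - 1) ⊕ Fin (n - 1))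

/-- The rational function field ℚ(C, A₂, …, Aₙ, D, B₂, …, Bₙ). -/
abbrev Stmt14.K (n : ℕ) := FractionRing (MvPolynomial (Stmt14.σ n) ℚ)

namespace Stmt14

variable (n : ℕ)

/-- The indeterminate `C`. -/
def Cv : K n := algebraMap (MvPolynomial (σ n) ℚ) (K n) (X (Sum.inl (Sum.inl ())))

/-- The indeterminate `D`. -/
def Dv : K n := algebraMap (MvPolynomial (σ n) ℚ) (K n) (X (Sum.inl (Sum.inr ())))

/-- The indeterminate `A_k`, for `2 ≤ k ≤ n` (junk value `0` outside this range). -/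
def Av (k : ℕ) : K n :=
  if h : k - 2 < n - 1 then
    algebraMap (MvPolynomial (σ n) ℚ) (K n) (X (Sum.inr (Sum.inl ⟨k - 2, h⟩))) else 0

/-- The indeterminate `B_k`, for `2 ≤ k ≤ n` (junk value `0` outside this range). -/
def Bv (k : ℕ) : K n :=
  if h : k - 2 < n - 1 then
    algebraMap (MvPolynomial (σ n) ℚ) (K n) (X (Sum.inr (Sum.inr ⟨k - 2, h⟩))) else 0

/-- `W_j` for `0 ≤ j ≤ n-1` : `W_{n-k} = C(1-(2A₂+A₃+⋯+A_k))/(A₂+B₂+⋯+B_k)` for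
`2 ≤ k ≤ n`, and `W_{n-1} = (D + C(1-2A₂))/A₂`. -/
def W (j : ℕ) : K n :=
  if j = n - 1 then (Dv n + Cv n * (1 - 2 * Av n 2)) / Av n 2
  else Cv n * (1 - (Av n 2 + ∑ i ∈ Icc 2 (n - j), Av n i)) /
      (Av n 2 + ∑ i ∈ Icc 2 (n - j), Bv n i)

/-- `Ŵ_j` for `0 ≤ j ≤ n-1` : `Ŵ_{n-1} = 1/A₂ - 1`,
`Ŵ₀ = (1-(2A₂+A₃+⋯+Aₙ))/(A₂+B₂+⋯+B_{n-1})`, and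
`Ŵ_{n-k} = (1-(2A₂+A₃+⋯+A_{k+1})+B_k)/(A₂+B₂+⋯+B_k)` for `2 ≤ k ≤ n-1`. -/
def Wh (j : ℕ) : K n :=
  if j = n - 1 then 1 / Av n 2 - 1
  else if j = 0 then
    (1 - (Av n 2 + ∑ i ∈ Icc 2 n, Av n i)) / (Av n 2 + ∑ i ∈ Icc 2 (n - 1), Bv n i)
  else
    (1 - (Av n 2 + ∑ i ∈ Icc 2 (n - j + 1), Av n i) + Bv n (n - j)) /
      (Av n 2 + ∑ i ∈ Icc 2 (n - j), Bv n i)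

/-- The subfield `ℚ(A₂)` of `K`, generated over `ℚ` by the indeterminate `A₂`. -/
def QA2 : IntermediateField ℚ (K n) := IntermediateField.adjoin ℚ {Av n 2}

end Stmt14

namespace Stmt14

/-- The indeterminates, viewed in the rational function field. -/
def var (n : ℕ) (i : σ n) : K n := algebraMap (MvPolynomial (σ n) ℚ) (K n) (X i)

lemma algebraicIndependent_var (n : ℕ) : AlgebraicIndependent ℚ (var n) :=
  (MvPolynomial.algebraicIndependent_X (σ n) ℚ).map'
    (f := IsScalarTower.toAlgHom ℚ (MvPolynomial (σ n) ℚ) (K n))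
    (IsFractionRing.injective (MvPolynomial (σ n) ℚ) (K n))

/-- The subfield of `K n` generated over `ℚ` by all indeterminates except `D`. -/
def noD (n : ℕ) : IntermediateField ℚ (K n) :=
  IntermediateField.adjoin ℚ (var n '' {Sum.inl (Sum.inr ())}ᶜ)

open scoped IntermediateField.algebraAdjoinAdjoin in
lemma transcendental_Dv (n : ℕ) : Transcendental (noD n) (Dv n) := by
  have h : Transcendental (Algebra.adjoin ℚ (var n '' {Sum.inl (Sum.inr ())}ᶜ)) (Dv n) :=
    (algebraicIndependent_var n).transcendental_adjoin (by simp)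
  -- `noD n` is the fraction field of the polynomial ring in these indeterminates.
  unfold noD
  exact fun h' => h ((IsFractionRing.isAlgebraic_iff _
    (IntermediateField.adjoin ℚ (var n '' {Sum.inl (Sum.inr ())}ᶜ)) (K n)).mpr h')

lemma var_mem_noD (n : ℕ) {i : σ n} (hi : i ≠ Sum.inl (Sum.inr ())) : var n i ∈ noD n :=
  IntermediateField.subset_adjoin _ _ ⟨i, hi, rfl⟩

lemma Cv_mem_noD (n : ℕ) : Cv n ∈ noD n := var_mem_noD n (by simp)

lemma Av_mem_noD (n k : ℕ) : Av n k ∈ noD n := by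
  unfold Av
  split
  · exact var_mem_noD n (by simp)
  · exact zero_mem _

lemma Bv_mem_noD (n k : ℕ) : Bv n k ∈ noD n := by
  unfold Bv
  split
  · exact var_mem_noD n (by simp)
  · exact zero_mem _

lemma Wh_mem_noD (n j : ℕ) : Wh n j ∈ noD n := by
  have hA := Av_mem_noD n
  have hB := Bv_mem_noD n
  have hsA (k : ℕ) : ∑ i ∈ Icc 2 k, Av n i ∈ noD n := sum_mem fun i _ => hA i
  have hsB (k : ℕ) : ∑ i ∈ Icc 2 k, Bv n i ∈ noD n := sum_mem fun i _ => hB i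
  unfold Wh
  split_ifs
  · exact sub_mem (div_mem (one_mem _) (hA 2)) (one_mem _)
  · exact div_mem (sub_mem (one_mem _) (add_mem (hA 2) (hsA _))) (add_mem (hA 2) (hsB _))
  · exact div_mem (add_mem (sub_mem (one_mem _) (add_mem (hA 2) (hsA _))) (hB _))
      (add_mem (hA 2) (hsB _))

lemma W_mem_noD (n j : ℕ) (hj : j ≠ n - 1) : W n j ∈ noD n := by
  have hA := Av_mem_noD n
  have hsA (k : ℕ) : ∑ i ∈ Icc 2 k, Av n i ∈ noD n := sum_mem fun i _ => hA i
  have hsB (k : ℕ) : ∑ i ∈ Icc 2 k, Bv n i ∈ noD n := sum_mem fun i _ => Bv_mem_noD n i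
  rw [W, if_neg hj]
  exact div_mem (mul_mem (Cv_mem_noD n) (sub_mem (one_mem _) (add_mem (hA 2) (hsA _))))
    (add_mem (hA 2) (hsB _))

lemma transcendental_Av_two (n : ℕ) (hn : 3 ≤ n) : Transcendental ℚ (Av n 2) := by
  have h : 2 - 2 < n - 1 := by omega
  rw [Av, dif_pos h]
  exact (algebraicIndependent_var n).transcendental _

lemma Av_two_ne_zero (n : ℕ) (hn : 3 ≤ n) : Av n 2 ≠ 0 := fun h =>
  transcendental_Av_two n hn (h ▸ isAlgebraic_zero)

lemma transcendental_Wh_last (n : ℕ) (hn : 3 ≤ n) : Transcendental ℚ (Wh n (n - 1)) := by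
  intro h
  refine transcendental_Av_two n hn ?_
  have h' := (h.add isAlgebraic_one).inv
  rwa [show (Wh n (n - 1) + 1)⁻¹ = Av n 2 by simp [Wh]] at h'

lemma transcendental_W_last (n : ℕ) (hn : 3 ≤ n) : Transcendental (noD n) (W n (n - 1)) := by
  intro h
  refine transcendental_Dv n ?_
  have hA : IsAlgebraic (noD n) (Av n 2) :=
    isAlgebraic_algebraMap (⟨_, Av_mem_noD n 2⟩ : noD n)
  have hC : IsAlgebraic (noD n) (Cv n * (1 - 2 * Av n 2)) :=
    isAlgebraic_algebraMap (⟨_, mul_mem (Cv_mem_noD n) (sub_mem (one_mem _)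
      (mul_mem (ofNat_mem _ 2) (Av_mem_noD n 2)))⟩ : noD n)
  have h' := (h.mul hA).sub hC
  rwa [show W n (n - 1) * Av n 2 - Cv n * (1 - 2 * Av n 2) = Dv n by
    rw [W, if_pos rfl, div_mul_cancel₀ _ (Av_two_ne_zero n hn), add_sub_cancel_right]] at h'

/-- Position of `W_j` (on the left) and `Ŵ_j` (on the right) in the family built up in layers:
`none` stands for `W_{n-1}`, `some (inr ())` for `Ŵ_{n-1}`, and `some (inl _)` for the elements of
smaller index, the `Ŵ_j` first. -/
def place (n : ℕ) : Fin n ⊕ Fin n → Option ((Fin (n - 1) ⊕ Fin (n - 1)) ⊕ Unit) :=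
  Sum.elim
    (fun j => if h : (j : ℕ) < n - 1 then some (Sum.inl (Sum.inr ⟨j, h⟩)) else none)
    (fun j => if h : (j : ℕ) < n - 1 then some (Sum.inl (Sum.inl ⟨j, h⟩)) else some (Sum.inr ()))

lemma place_injective (n : ℕ) : Function.Injective (place n) := by
  rintro (⟨i, hi⟩ | ⟨i, hi⟩) (⟨j, hj⟩ | ⟨j, hj⟩) h <;>
    simp only [place, Sum.elim_inl, Sum.elim_inr] at h <;>
    split_ifs at h <;> simp at h ⊢ <;> omega

end Stmt14

/-- If `Ŵ₀, …, Ŵ_{n−2}, W₀, …, W_{n−2}` are algebraically independent over the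
subfield `ℚ(A₂)`, then all of `W₀, …, W_{n−1}, Ŵ₀, …, Ŵ_{n−1}` are
algebraically independent over `ℚ`. -/
theorem stmt14 (n : ℕ) (hn : 3 ≤ n)
    (hindep : AlgebraicIndependent (Stmt14.QA2 n)
      (Sum.elim (fun j : Fin (n - 1) => Stmt14.Wh n j)
        (fun j : Fin (n - 1) => Stmt14.W n j))) :
    AlgebraicIndependent ℚ
      (Sum.elim (fun j : Fin n => Stmt14.W n j) (fun j : Fin n => Stmt14.Wh n j)) := by
  open Stmt14 in
  -- Adjoin `Ŵ_{n-1}`, which lies in `ℚ(A₂)`.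
  have h₁ : AlgebraicIndependent ℚ
      (Sum.elim (Sum.elim (fun j : Fin (n - 1) => Wh n j) (fun j : Fin (n - 1) => W n j))
        (fun _ : Unit => Wh n (n - 1))) := by
    refine AlgebraicIndependent.sumElim_of_tower (S := QA2 n)
      (algebraicIndependent_unique_type_iff.mpr (transcendental_Wh_last n hn)) ?_ hindep
    rintro _ ⟨_, rfl⟩
    have hA : Av n 2 ∈ QA2 n := IntermediateField.mem_adjoin_simple_self ℚ _
    refine ⟨⟨Wh n (n - 1), ?_⟩, rfl⟩
    rw [Wh, if_pos rfl]
    exact sub_mem (div_mem (one_mem _) hA) (one_mem _)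
  -- Adjoin `W_{n-1}`; the family so far lies in `noD n`.
  have h₂ := (h₁.option_iff_transcendental (W n (n - 1))).mpr <| by
    have hle : Algebra.adjoin ℚ (Set.range
        (Sum.elim (Sum.elim (fun j : Fin (n - 1) => Wh n j) (fun j : Fin (n - 1) => W n j))
          (fun _ : Unit => Wh n (n - 1)))) ≤ (noD n).toSubalgebra := by
      refine Algebra.adjoin_le ?_
      rintro _ ⟨(j | j) | _, rfl⟩
      · exact Wh_mem_noD n j
      · exact W_mem_noD n j j.isLt.ne
      · exact Wh_mem_noD n (n - 1)
    exact Transcendental.of_ringHom_of_comp_eq (S := noD n)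
      (Subalgebra.inclusion hle).toRingHom (RingHom.id (K n)) (transcendental_W_last n hn)
      (Subalgebra.inclusion_injective hle) rfl
  have h₃ := h₂.comp (place n) (place_injective n)
  convert! h₃ using 1
  ext (j | j)
  all_goals
    by_cases h : (j : ℕ) < n - 1
    · simp [place, h]
    · simp [place, show (j : ℕ) = n - 1 by omega]
end
end
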